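/- Let p be an odd prime, q a power of p, and let P be a Sylow p-subgroup of the symplectic group Sp_10(F_q). Then the number of conjugacy classes of P equals 2v⁸ + 24v⁷ + 132v⁶ + 395v⁵ + 630v⁴ + 500v³ + 180v² + 25v + 1, where v = q − 1. -/

import Mathlib

namespace Sp10
abbrev Pol := List (ℤ × ℕ)

/-- insert a term, combining with an equal monomial -/
def ins (c : ℤ) (m : ℕ) : Pol → Pol
  | [] => [(c, m)]
  | t :: p => bif Nat.beq m t.2 then
      (bif Int.natAbs (c + t.1) |>.beq 0 then p else (c + t.1, m) :: p)
    else t :: ins c m p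

def padd (p q : Pol) : Pol := p.foldr (fun t a => ins t.1 t.2 a) q
def pscale (c : ℤ) (m : ℕ) (p : Pol) : Pol := p.map fun t => (c * t.1, m * t.2)
def pmul (p q : Pol) : Pol := p.foldr (fun t a => padd (pscale t.1 t.2 q) a) []
def has (x m : ℕ) : Bool := Nat.beq (m % x) 0
def without (x : ℕ) (p : Pol) : Pol := p.filter fun t => !has x t.2
def coefOf (x : ℕ) (p : Pol) : Pol :=
  (p.filter fun t => has x t.2).map fun t => (t.1, t.2 / x)

/-- substitute `x = s / (c m)` in `q` and clear denominators -/
def psub (x : ℕ) (c : ℤ) (m : ℕ) (s : Pol) : ℕ → Pol → Option (Pol × ℕ)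
  | 0, q => bif q.any (fun t => has x t.2) then none else some (q, 0)
  | n + 1, q => bif q.any (fun t => has x t.2) then
      match psub x c m s n (coefOf x q) with
      | none => none
      | some r => some (padd (pscale (c ^ (r.2 + 1)) (m ^ (r.2 + 1)) (without x q)) (pmul s r.1),
          r.2 + 1)
    else some (q, 0)

def content (U : ℕ) (p : Pol) : ℕ := Nat.gcd (p.foldr (fun t a => Nat.gcd t.2 a) 0) (U ^ 6)
def pnorm (U : ℕ) (p : Pol) : Pol := p.map fun t => (t.1, t.2 / content U p)

def subAll (x : ℕ) (c : ℤ) (m : ℕ) (s : Pol) (U : ℕ) : List Pol → Option (List Pol)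
  | [] => some []
  | q :: E => match psub x c m s 8 q with
    | none => none
    | some r => match subAll x c m s U E with
      | none => none
      | some E' => bif r.1.isEmpty then some E' else some (pnorm U r.1 :: E')

/-- find `p = c m x + r`: return `(c, m, -r)` -/
def linIn (x U : ℕ) (p : Pol) : Option (ℤ × ℕ × Pol) :=
  match coefOf x p with
  | [t] => bif has x t.2 || !(Nat.beq (U ^ 20 % t.2) 0) || !(Nat.beq (2 ^ 600 % t.1.natAbs) 0) then none
      else some (t.1, t.2, (without x p).map fun t => (-t.1, t.2))
  | _ => none

inductive Cert
  | L
  | S (e y : ℕ) (t : Cert)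
  | R (e y x : ℕ) (t : Cert)
  | X (x : ℕ) (t u : Cert)
  | D (x : ℕ) (t u : Cert)

def vadd : List ℤ → List ℤ → List ℤ
  | [], l => l
  | a :: l, [] => a :: l
  | a :: l, b :: k => (a + b) :: vadd l k
def vneg (l : List ℤ) : List ℤ := l.map fun a => -a
def vq : ℕ → List ℤ → List ℤ
  | 0, l => l
  | n + 1, l => vadd (vq n l) (0 :: vq n l)
def vv : ℕ → List ℤ → List ℤ
  | 0, l => l
  | n + 1, l => 0 :: vv n l

def dropVar (x : ℕ) (l : List ℕ) : List ℕ := l.filter fun y => !(Nat.beq y x)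
def memb (x : ℕ) (l : List ℕ) : Bool := l.any fun y => Nat.beq y x
def zeroAll (x : ℕ) (E : List Pol) : List Pol := (E.map (without x)).filter fun p => !p.isEmpty

def run : Cert → List ℕ → List ℕ → List Pol → Option (List ℤ)
  | .L, Us, Fr, E => bif E.all List.isEmpty && Nat.ble 24 Fr.length then
      some (vv Us.length (vq (Fr.length - 24) [1])) else none
  | .S e y t, Us, Fr, E =>
    match linIn y Us.prod (E.getD e []) with
    | none => none
    | some (c, m, s) => bif memb y Fr then
      match subAll y c m s Us.prod (E.eraseIdx e) with
      | none => none
      | some E' => run t Us (dropVar y Fr) E' else none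
  | .R e y x t, Us, Fr, E =>
    match linIn x Us.prod (pnorm Us.prod (coefOf y (E.getD e []))) with
    | none => none
    | some (c, m, s) => bif memb x Fr then
      match subAll x c m ((1, x) :: s) Us.prod E with
      | none => none
      | some E' => run t Us Fr E' else none
  | .X x t u, Us, Fr, E => bif memb x Fr then
      match run t Us (dropVar x Fr) (zeroAll x E), run u (x :: Us) (dropVar x Fr) E with
      | some a, some b => some (vadd a b)
      | _, _ => none
    else none
  | .D x t u, Us, Fr, E => bif memb x Us then
      match run t (dropVar x Us) Fr (zeroAll x E), run u (dropVar x Us) (x :: Fr) E with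
      | some a, some b => some (vadd b (vneg a))
      | _, _ => none
    else none

section Sound
variable {F : Type*} [Field F]

noncomputable def mon (ρ : ℕ → F) (m : ℕ) : F :=
  if m = 0 then 0 else (m.primeFactorsList.map ρ).prod

theorem mon_mul (ρ : ℕ → F) (a b : ℕ) : mon ρ (a * b) = mon ρ a * mon ρ b := by
  unfold mon
  by_cases ha : a = 0
  · simp [ha]
  by_cases hb : b = 0
  · simp [hb]
  rw [if_neg ha, if_neg hb, if_neg (Nat.mul_ne_zero ha hb),
    ((Nat.perm_primeFactorsList_mul ha hb).map ρ).prod_eq, List.map_append, List.prod_append]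

theorem mon_one (ρ : ℕ → F) : mon ρ 1 = 1 := by simp [mon]

theorem mon_pow (ρ : ℕ → F) (a n : ℕ) : mon ρ (a ^ n) = mon ρ a ^ n := by
  induction n with
  | zero => simp [mon_one]
  | succ n ih => rw [pow_succ, mon_mul, ih, pow_succ]

theorem mon_prime (ρ : ℕ → F) {p : ℕ} (hp : p.Prime) : mon ρ p = ρ p := by
  simp [mon, hp.ne_zero, Nat.primeFactorsList_prime hp]

theorem mon_congr {ρ ρ' : ℕ → F} {x m : ℕ} (hm : ¬ x ∣ m) (h : ∀ p, p ≠ x → ρ p = ρ' p) :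
    mon ρ m = mon ρ' m := by
  unfold mon
  split_ifs with h0
  · rfl
  · congr 1
    apply List.map_congr_left
    intro p hp
    apply h
    rintro rfl
    exact hm (Nat.dvd_of_mem_primeFactorsList hp)

noncomputable def ev (ρ : ℕ → F) (p : Pol) : F := (p.map fun t => (t.1 : F) * mon ρ t.2).sum

theorem ev_nil (ρ : ℕ → F) : ev ρ [] = 0 := rfl
theorem ev_cons (ρ : ℕ → F) (t : ℤ × ℕ) (p : Pol) :
    ev ρ (t :: p) = (t.1 : F) * mon ρ t.2 + ev ρ p := by simp [ev]

theorem ev_ins (ρ : ℕ → F) (c : ℤ) (m : ℕ) (p : Pol) :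
    ev ρ (ins c m p) = (c : F) * mon ρ m + ev ρ p := by
  induction p with
  | nil => simp [ins, ev]
  | cons t p ih =>
    unfold ins
    cases h : Nat.beq m t.2
    · simp only [cond_false, ev_cons, ih]; ring
    · have hm := Nat.eq_of_beq_eq_true h
      cases h' : Nat.beq (Int.natAbs (c + t.1)) 0
      · simp only [cond_true, cond_false, ev_cons, ← hm]; push_cast; ring
      · have h2 : c + t.1 = 0 := by
          have := Nat.eq_of_beq_eq_true h'
          omega
        have h3 : (c : F) + (t.1 : F) = 0 := by exact_mod_cast congrArg (Int.cast : ℤ → F) h2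
        simp only [cond_true, ev_cons, ← hm]
        linear_combination (-mon ρ m) * h3

theorem ev_padd (ρ : ℕ → F) (p q : Pol) : ev ρ (padd p q) = ev ρ p + ev ρ q := by
  induction p with
  | nil => simp [padd, ev_nil]
  | cons t p ih =>
    have : padd (t :: p) q = ins t.1 t.2 (padd p q) := rfl
    rw [this, ev_ins, ih, ev_cons]; ring

theorem ev_pscale (ρ : ℕ → F) (c : ℤ) (m : ℕ) (p : Pol) :
    ev ρ (pscale c m p) = (c : F) * mon ρ m * ev ρ p := by
  induction p with
  | nil => simp [pscale, ev_nil]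
  | cons t p ih =>
    have : pscale c m (t :: p) = (c * t.1, m * t.2) :: pscale c m p := rfl
    rw [this, ev_cons, ih, ev_cons, mon_mul]; push_cast; ring

theorem ev_pmul (ρ : ℕ → F) (p q : Pol) : ev ρ (pmul p q) = ev ρ p * ev ρ q := by
  induction p with
  | nil => simp [pmul, ev_nil]
  | cons t p ih =>
    have : pmul (t :: p) q = padd (pscale t.1 t.2 q) (pmul p q) := rfl
    rw [this, ev_padd, ev_pscale, ih, ev_cons]; ring

theorem has_iff (x m : ℕ) : has x m = true ↔ x ∣ m := by
  unfold has
  rw [Nat.dvd_iff_mod_eq_zero]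
  constructor
  · exact Nat.eq_of_beq_eq_true
  · intro h; rw [h]; rfl

theorem has_false (x m : ℕ) : has x m = false ↔ ¬ x ∣ m := by
  rw [← has_iff]; simp

theorem ev_split (ρ : ℕ → F) {x : ℕ} (hx : x.Prime) (p : Pol) :
    ev ρ p = ev ρ (without x p) + ρ x * ev ρ (coefOf x p) := by
  induction p with
  | nil => simp [without, coefOf, ev_nil]
  | cons t p ih =>
    unfold without coefOf at ih ⊢
    cases h : has x t.2
    · simp only [List.filter_cons, h, ev_cons, ih]; simp [ev_cons]; ring
    · obtain ⟨k, hk⟩ := (has_iff _ _).1 h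
      have : mon ρ t.2 = ρ x * mon ρ (t.2 / x) := by
        rw [hk, Nat.mul_div_cancel_left _ hx.pos, mon_mul, mon_prime ρ hx]
      simp only [List.filter_cons, h, ev_cons, ih]; simp [ev_cons, this]; ring

theorem ev_congr {ρ ρ' : ℕ → F} {x : ℕ} (p : Pol) (hp : ∀ t ∈ p, ¬ x ∣ t.2)
    (h : ∀ p, p ≠ x → ρ p = ρ' p) : ev ρ p = ev ρ' p := by
  unfold ev
  congr 1
  apply List.map_congr_left
  intro t ht
  rw [mon_congr (hp t ht) h]

theorem without_not (x : ℕ) (p : Pol) : ∀ t ∈ without x p, ¬ x ∣ t.2 := by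
  intro t ht
  unfold without at ht
  rw [List.mem_filter] at ht
  rw [← has_false]; simpa using ht.2

theorem psub_ev {ρ ρ' : ℕ → F} {x : ℕ} (hx : x.Prime) (c : ℤ) (m : ℕ) (s : Pol)
    (h : ∀ p, p ≠ x → ρ p = ρ' p) (hs : (c : F) * mon ρ' m * ρ x = ev ρ' s) (n : ℕ) :
    ∀ (q : Pol) (r : Pol × ℕ), psub x c m s n q = some r →
      ev ρ' r.1 = ((c : F) * mon ρ' m) ^ r.2 * ev ρ q := by
  have base : ∀ q : Pol, q.any (fun t => has x t.2) = false → ev ρ' q = ev ρ q := by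
    intro q hq
    refine (ev_congr q ?_ h).symm
    intro t ht
    rw [List.any_eq_false] at hq
    rw [← has_iff]; exact hq t ht
  induction n with
  | zero =>
    intro q r hr
    unfold psub at hr
    cases hq : q.any (fun t => has x t.2) <;> rw [hq] at hr
    · simp only [cond_false, Option.some.injEq] at hr
      subst hr
      simp [base q hq]
    · simp at hr
  | succ n ih =>
    intro q r hr
    unfold psub at hr
    cases hq : q.any (fun t => has x t.2) <;> rw [hq] at hr
    · simp only [cond_false, Option.some.injEq] at hr
      subst hr
      simp [base q hq]
    · simp only [cond_true] at hr
      cases hp : psub x c m s n (coefOf x q) with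
      | none => rw [hp] at hr; simp at hr
      | some r' =>
        rw [hp] at hr
        simp only [Option.some.injEq] at hr
        subst hr
        simp only [ev_padd, ev_pscale, ev_pmul, ih _ _ hp, mon_pow]
        rw [ev_split ρ hx q, ← ev_congr (without x q) (without_not x q) h, ← hs]
        push_cast
        ring

theorem content_dvd (U : ℕ) (p : Pol) : ∀ t ∈ p, content U p ∣ t.2 := by
  intro t ht
  refine (Nat.gcd_dvd_left _ _).trans ?_
  induction p with
  | nil => simp at ht
  | cons a p ih =>
    simp only [List.foldr_cons]
    rcases List.mem_cons.1 ht with rfl | h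
    · exact Nat.gcd_dvd_left _ _
    · exact (Nat.gcd_dvd_right _ _).trans (ih h)

theorem ev_div (ρ : ℕ → F) (g : ℕ) (p : Pol) (hg : ∀ t ∈ p, g ∣ t.2) (h0 : g ≠ 0) :
    ev ρ p = mon ρ g * ev ρ (p.map fun t => (t.1, t.2 / g)) := by
  induction p with
  | nil => simp [ev_nil]
  | cons a p ih =>
    obtain ⟨k, hk⟩ := hg a (by simp)
    rw [List.map_cons, ev_cons, ev_cons, ih (fun t ht => hg t (by simp [ht]))]
    simp only [hk, Nat.mul_div_cancel_left _ (Nat.pos_of_ne_zero h0), mon_mul]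
    ring

theorem mon_ne_zero_of_dvd (ρ : ℕ → F) {m U n : ℕ} (hU : mon ρ U ≠ 0) (h : m ∣ U ^ n) :
    mon ρ m ≠ 0 := by
  obtain ⟨k, hk⟩ := h
  have : mon ρ (U ^ n) ≠ 0 := by rw [mon_pow]; exact pow_ne_zero _ hU
  rw [hk, mon_mul] at this
  exact left_ne_zero_of_mul this

theorem ev_pnorm (ρ : ℕ → F) {U : ℕ} (hU : mon ρ U ≠ 0) (p : Pol) :
    ev ρ (pnorm U p) = 0 ↔ ev ρ p = 0 := by
  have h1 : content U p ∣ U ^ 6 := Nat.gcd_dvd_right _ _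
  have hU0 : U ≠ 0 := by rintro rfl; simp [mon] at hU
  have h2 : content U p ≠ 0 := fun h => by
    rw [h, zero_dvd_iff] at h1; exact pow_ne_zero _ hU0 h1
  rw [ev_div ρ _ p (content_dvd U p) h2]
  simp [pnorm, mon_ne_zero_of_dvd ρ hU h1]

theorem subAll_ev {ρ ρ' : ℕ → F} {x : ℕ} (hx : x.Prime) (c : ℤ) (m : ℕ) (s : Pol) (U : ℕ)
    (h : ∀ p, p ≠ x → ρ p = ρ' p) (hs : (c : F) * mon ρ' m * ρ x = ev ρ' s)
    (hU : mon ρ' U ≠ 0) (hc : (c : F) * mon ρ' m ≠ 0) :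
    ∀ (E E' : List Pol), subAll x c m s U E = some E' →
      ((∀ e ∈ E, ev ρ e = 0) ↔ ∀ e ∈ E', ev ρ' e = 0) := by
  intro E
  induction E with
  | nil => intro E' h; simp only [subAll, Option.some.injEq] at h; subst h; simp
  | cons q E ih =>
    intro E' hE
    unfold subAll at hE
    cases h1 : psub x c m s 8 q with
    | none => simp [h1] at hE
    | some r =>
      cases h2 : subAll x c m s U E with
      | none => simp [h1, h2] at hE
      | some E1 =>
        simp only [h1, h2] at hE
        have hr := psub_ev hx c m s h hs 8 q r h1
        have hq : ev ρ q = 0 ↔ ev ρ' r.1 = 0 := by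
          rw [hr]; simp [pow_ne_zero _ hc]
        rw [List.forall_mem_cons, hq, ih _ h2]
        cases h3 : r.1.isEmpty <;> rw [h3] at hE
        · simp only [cond_false, Option.some.injEq] at hE
          subst hE
          rw [List.forall_mem_cons, ev_pnorm ρ' hU]
        · simp only [cond_true, Option.some.injEq] at hE
          subst hE
          rw [List.isEmpty_iff.1 h3]
          simp [ev_nil]

theorem linIn_spec (h2 : (2 : F) ≠ 0) {x U : ℕ} (hx : x.Prime) {p s : Pol} {c : ℤ} {m : ℕ}
    (h : linIn x U p = some (c, m, s)) :
    (∀ ρ : ℕ → F, ev ρ p = (c : F) * mon ρ m * ρ x - ev ρ s) ∧ ¬ x ∣ m ∧ (∀ t ∈ s, ¬ x ∣ t.2) ∧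
      m ∣ U ^ 20 ∧ (c : F) ≠ 0 := by
  unfold linIn at h
  split at h
  · rename_i t ht
    cases hb : (has x t.2 || !(Nat.beq (U ^ 20 % t.2) 0) || !(Nat.beq (2 ^ 600 % t.1.natAbs) 0))
    · rw [hb] at h
      simp only [cond_false, Option.some.injEq, Prod.mk.injEq] at h
      obtain ⟨rfl, rfl, rfl⟩ := h
      rw [Bool.or_eq_false_iff, Bool.or_eq_false_iff, Bool.not_eq_false', Bool.not_eq_false',
        has_false] at hb
      refine ⟨?_, hb.1.1, ?_, ?_, ?_⟩
      · intro ρ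
        rw [ev_split ρ hx p, ht]
        have : ∀ q : Pol, ev ρ (q.map fun t => (-t.1, t.2)) = - ev ρ q := by
          intro q
          induction q with
          | nil => simp [ev_nil]
          | cons a q ih => rw [List.map_cons, ev_cons, ih, ev_cons]; push_cast; ring
        rw [this, ev_cons, ev_nil]; ring
      · intro t' ht'
        rw [List.mem_map] at ht'
        obtain ⟨a, ha, rfl⟩ := ht'
        exact without_not x p a ha
      · exact Nat.dvd_of_mod_eq_zero (Nat.eq_of_beq_eq_true hb.1.2)
      · have h3 : t.1.natAbs ∣ 2 ^ 600 := Nat.dvd_of_mod_eq_zero (Nat.eq_of_beq_eq_true hb.2)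
        obtain ⟨k, hk⟩ := h3
        have h4 : ((t.1.natAbs : ℕ) : F) * (k : F) = (2 : F) ^ 600 := by
          have := congrArg (Nat.cast : ℕ → F) hk
          rw [Nat.cast_mul, Nat.cast_pow] at this
          exact this.symm
        have h5 : ((t.1.natAbs : ℕ) : F) ≠ 0 := by
          intro h0
          rw [h0, zero_mul] at h4
          exact pow_ne_zero _ h2 h4.symm
        intro h0
        apply h5
        rcases Int.natAbs_eq t.1 with h6 | h6
        · rw [h6, Int.cast_natCast] at h0; exact h0
        · rw [h6, Int.cast_neg, Int.cast_natCast] at h0; exact neg_eq_zero.1 h0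
    · rw [hb] at h; simp at h
  · simp at h

def Sol (F : Type*) [Field F] (Us Fr : List ℕ) (E : List Pol) : Set (ℕ → F) :=
  {ρ | (∀ p ∈ Us, ρ p ≠ 0) ∧ (∀ p, p ∉ Us → p ∉ Fr → ρ p = 0) ∧ ∀ e ∈ E, ev ρ e = 0}

theorem Sol_finite [Finite F] (Us Fr : List ℕ) (E : List Pol) : (Sol F Us Fr E).Finite := by
  classical
  let L := (Us ++ Fr).toFinset
  have : Function.Injective (fun (r : Sol F Us Fr E) (i : L) => r.1 i) := by
    intro a b hab
    ext p
    by_cases hp : p ∈ L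
    · exact congrFun hab ⟨p, hp⟩
    · have h1 : p ∉ Us ∧ p ∉ Fr := by simpa [L] using hp
      rw [a.2.2.1 p h1.1 h1.2, b.2.2.1 p h1.1 h1.2]
  exact Set.finite_coe_iff.1 (Finite.of_injective _ this)

theorem mem_dropVar {x y : ℕ} {l : List ℕ} : y ∈ dropVar x l ↔ y ∈ l ∧ y ≠ x := by
  unfold dropVar
  rw [List.mem_filter]
  apply and_congr_right
  intro _
  cases h : Nat.beq y x
  · simpa using Nat.ne_of_beq_eq_false h
  · simpa using Nat.eq_of_beq_eq_true h

theorem memb_iff {x : ℕ} {l : List ℕ} : memb x l = true ↔ x ∈ l := by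
  unfold memb
  rw [List.any_eq_true]
  constructor
  · rintro ⟨y, hy, h⟩
    rw [← Nat.eq_of_beq_eq_true h]; exact hy
  · intro h
    exact ⟨x, h, Nat.beq_refl x⟩

structure Inv (Us Fr : List ℕ) : Prop where
  pu : ∀ p ∈ Us, p.Prime
  pf : ∀ p ∈ Fr, p.Prime
  nu : Us.Nodup
  nf : Fr.Nodup
  dj : ∀ p ∈ Us, p ∉ Fr

theorem mon_prod_ne {Us : List ℕ} (hp : ∀ p ∈ Us, p.Prime) (ρ : ℕ → F) (h : ∀ p ∈ Us, ρ p ≠ 0) :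
    mon ρ Us.prod ≠ 0 := by
  induction Us with
  | nil => simp [mon_one]
  | cons a l ih =>
    rw [List.prod_cons, mon_mul, mon_prime ρ (hp a (by simp))]
    exact mul_ne_zero (h a (by simp)) (ih (fun p hp' => hp p (by simp [hp']))
      (fun p hp' => h p (by simp [hp'])))

theorem ncard_split [Finite F] {Us Fr : List ℕ} {E : List Pol} {x : ℕ} (hx : x ∈ Fr) (hu : x ∉ Us) :
    (Sol F Us Fr E).ncard =
      (Sol F Us (dropVar x Fr) E).ncard + (Sol F (x :: Us) (dropVar x Fr) E).ncard := by
  rw [← Set.ncard_union_eq _ (Sol_finite _ _ _) (Sol_finite _ _ _)]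
  · congr 1
    ext ρ
    simp only [Sol, Set.mem_union, Set.mem_ofPred_eq, mem_dropVar, List.mem_cons]
    constructor
    · rintro ⟨h1, h2, h3⟩
      by_cases h : ρ x = 0
      · left
        refine ⟨h1, fun p hp hp' => ?_, h3⟩
        by_cases hpx : p = x
        · rw [hpx, h]
        · exact h2 p hp (fun hh => hp' ⟨hh, hpx⟩)
      · right
        refine ⟨?_, fun p hp hp' => ?_, h3⟩
        · rintro p (rfl | hp)
          · exact h
          · exact h1 p hp
        · exact h2 p (fun hh => hp (Or.inr hh)) (fun hh => hp' ⟨hh, fun h' => hp (Or.inl h')⟩)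
    · rintro (⟨h1, h2, h3⟩ | ⟨h1, h2, h3⟩)
      · exact ⟨h1, fun p hp hp' => h2 p hp (fun hh => hp' hh.1), h3⟩
      · refine ⟨fun p hp => h1 p (Or.inr hp), fun p hp hp' => h2 p ?_ (fun hh => hp' hh.1), h3⟩
        rintro (rfl | hh)
        · exact hp' hx
        · exact hp hh
  · rw [Set.disjoint_left]
    rintro ρ ⟨_, h2, _⟩ ⟨h1, _, _⟩
    exact h1 x (by simp) (h2 x hu (by simp [mem_dropVar]))

theorem ncard_units [Finite F] (Us : List ℕ) (hn : Us.Nodup) :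
    (Sol F Us [] []).ncard = ({a : F | a ≠ 0}).ncard ^ Us.length := by
  classical
  induction Us with
  | nil =>
    rw [List.length_nil, pow_zero, Set.ncard_eq_one]
    refine ⟨fun _ => 0, ?_⟩
    ext ρ
    simp only [Sol, Set.mem_ofPred_eq, Set.mem_singleton_iff]
    constructor
    · rintro ⟨_, h, _⟩; funext p; exact h p (by simp) (by simp)
    · rintro rfl; simp
  | cons x l ih =>
    rw [List.nodup_cons] at hn
    rw [List.length_cons, pow_succ', ← ih hn.2, ← Set.ncard_prod]
    refine Set.ncard_congr (fun ρ _ => (ρ x, Function.update ρ x 0)) ?_ ?_ ?_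
    · rintro ρ ⟨h1, h2, h3⟩
      refine ⟨h1 x (by simp), ?_, ?_, by simp⟩
      · intro p hp
        have : p ≠ x := by rintro rfl; exact hn.1 hp
        simp only [Function.update_of_ne this]
        exact h1 p (by simp [hp])
      · intro p hp _
        by_cases hpx : p = x
        · subst hpx; simp
        · simp only [Function.update_of_ne hpx]
          exact h2 p (by simp [hp, hpx]) (by simp)
    · intro ρ ρ' _ _ h
      rw [Prod.mk.injEq] at h
      funext p
      by_cases hpx : p = x
      · rw [hpx]; exact h.1
      · have := congrFun h.2 p
        simpa [Function.update_of_ne hpx] using this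
    · rintro ⟨a, ρ⟩ ⟨ha, h1, h2, h3⟩
      refine ⟨Function.update ρ x a, ⟨?_, ?_, by simp⟩, ?_⟩
      · intro p hp
        by_cases hpx : p = x
        · subst hpx; simpa using ha
        · simp only [Function.update_of_ne hpx]
          exact h1 p (by simpa [hpx] using hp)
      · intro p hp _
        simp only [List.mem_cons, not_or] at hp
        simp only [Function.update_of_ne hp.1]
        exact h2 p hp.2 (by simp)
      · have : ρ x = 0 := h2 x hn.1 (by simp)
        simp only [Function.update_self, Function.update_idem, Prod.mk.injEq, true_and]
        rw [← this]; simp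

theorem ncard_leaf [Finite F] (Fr : List ℕ) : ∀ (Us : List ℕ), Inv Us Fr →
    (Sol F Us Fr []).ncard =
      ({a : F | a ≠ 0}).ncard ^ Us.length * (({a : F | a ≠ 0}).ncard + 1) ^ Fr.length := by
  induction Fr with
  | nil => intro Us h; simp [ncard_units Us h.nu]
  | cons x l ih =>
    intro Us h
    have hn := List.nodup_cons.1 h.nf
    have hx : x ∉ Us := fun hx => h.dj x hx (by simp)
    have hd : dropVar x (x :: l) = l := by
      unfold dropVar
      rw [List.filter_cons]
      simp only [Nat.beq_refl, Bool.not_true]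
      rw [if_neg (by simp), List.filter_eq_self]
      intro a ha
      have : a ≠ x := by rintro rfl; exact hn.1 ha
      have hb : Nat.beq a x = false := by
        cases h : Nat.beq a x
        · rfl
        · exact absurd (Nat.eq_of_beq_eq_true h) this
      simp [hb]
    have i1 : Inv Us l := ⟨h.pu, fun p hp => h.pf p (by simp [hp]), h.nu, hn.2,
      fun p hp hp' => h.dj p hp (by simp [hp'])⟩
    have i2 : Inv (x :: Us) l := by
      refine ⟨?_, i1.pf, List.nodup_cons.2 ⟨hx, h.nu⟩, hn.2, ?_⟩
      · intro p hp
        rcases List.mem_cons.1 hp with rfl | hp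
        · exact h.pf p (by simp)
        · exact h.pu p hp
      · intro p hp
        rcases List.mem_cons.1 hp with rfl | hp
        · exact hn.1
        · exact i1.dj p hp
    rw [ncard_split (x := x) (by simp) hx, hd, ih _ i1, ih _ i2]
    simp only [List.length_cons]
    ring

theorem Sol_zero {Us Fr : List ℕ} {E : List Pol} {x : ℕ} (hp : x.Prime) (hu : x ∉ Us) (hf : x ∉ Fr) :
    Sol F Us Fr (zeroAll x E) = Sol F Us Fr E := by
  ext ρ
  simp only [Sol, Set.mem_ofPred_eq]
  apply and_congr_right; intro _
  apply and_congr_right; intro h2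
  have hx : ρ x = 0 := h2 x hu hf
  have key : ∀ e, ev ρ (without x e) = ev ρ e := by
    intro e
    rw [ev_split ρ hp e, hx]; ring
  unfold zeroAll
  constructor
  · intro h e he
    by_cases h' : (without x e).isEmpty
    · rw [← key, List.isEmpty_iff.1 h', ev_nil]
    · rw [← key]
      apply h
      rw [List.mem_filter]
      exact ⟨List.mem_map_of_mem he, by simpa using h'⟩
  · intro h e he
    obtain ⟨a, ha, rfl⟩ := List.mem_map.1 (List.mem_filter.1 he).1
    rw [key]; exact h a ha

theorem ncard_solve {Us Fr : List ℕ} (hI : Inv Us Fr) {E Erest E' : List Pol} {p s : Pol}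
    {x : ℕ} (hx : x ∈ Fr) {c : ℤ} {m : ℕ} (h2 : (2 : F) ≠ 0)
    (hl : linIn x Us.prod p = some (c, m, s))
    (hE : ∀ P : Pol → Prop, (∀ e ∈ E, P e) ↔ P p ∧ ∀ e ∈ Erest, P e)
    (hs : subAll x c m s Us.prod Erest = some E') :
    (Sol F Us Fr E).ncard = (Sol F Us (dropVar x Fr) E').ncard := by
  classical
  have hxp := hI.pf x hx
  have hu : x ∉ Us := fun h => hI.dj x h hx
  obtain ⟨l1, l2, l3, l4, l5⟩ := linIn_spec h2 hxp hl
  have hm : ∀ ρ : ℕ → F, (∀ p ∈ Us, ρ p ≠ 0) → (c : F) * mon ρ m ≠ 0 := fun ρ hρ =>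
    mul_ne_zero l5 (mon_ne_zero_of_dvd ρ (mon_prod_ne hI.pu ρ hρ) l4)
  have hupd : ∀ (ρ : ℕ → F) a, (∀ p ∈ Us, ρ p ≠ 0) → ∀ p ∈ Us, Function.update ρ x a p ≠ 0 := by
    intro ρ a h p hp
    have : p ≠ x := by rintro rfl; exact hu hp
    rw [Function.update_of_ne this]; exact h p hp
  have hoff : ∀ (ρ : ℕ → F) a p, p ≠ x → ρ p = Function.update ρ x a p := by
    intro ρ a p hp; rw [Function.update_of_ne hp]
  refine Set.ncard_congr (fun ρ _ => Function.update ρ x 0) ?_ ?_ ?_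
  · rintro ρ ⟨h1, h3, h4⟩
    rw [hE, l1] at h4
    refine ⟨hupd ρ 0 h1, ?_, ?_⟩
    · intro p hp hp'
      by_cases hpx : p = x
      · subst hpx; simp
      · rw [← hoff ρ 0 p hpx]
        exact h3 p hp (fun h => hp' (mem_dropVar.2 ⟨h, hpx⟩))
    · refine (subAll_ev hxp c m s Us.prod (hoff ρ 0) ?_ (mon_prod_ne hI.pu _ (hupd ρ 0 h1))
        (hm _ (hupd ρ 0 h1)) _ _ hs).1 h4.2
      rw [← mon_congr l2 (hoff ρ 0), ← ev_congr s l3 (hoff ρ 0)]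
      linear_combination h4.1
  · rintro ρ ρ' ⟨h1, h3, h4⟩ ⟨h1', h3', h4'⟩ h
    have hag : ∀ p, p ≠ x → ρ p = ρ' p := by
      intro p hp
      have := congrFun h p
      simpa [Function.update_of_ne hp] using this
    funext p
    by_cases hpx : p = x
    · subst hpx
      rw [hE, l1] at h4 h4'
      have e1 := h4.1
      have e2 := h4'.1
      rw [← mon_congr l2 hag, ← ev_congr s l3 hag] at e2
      apply mul_left_cancel₀ (hm ρ h1)
      linear_combination e1 - e2
    · exact hag p hpx
  · rintro ρ ⟨h1, h3, h4⟩
    have hx0 : ρ x = 0 := h3 x hu (by simp [mem_dropVar])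
    set a : F := ev ρ s / ((c : F) * mon ρ m) with ha
    have hae : (c : F) * mon ρ m * a = ev ρ s := by rw [ha, mul_comm, div_mul_cancel₀ _ (hm ρ h1)]
    refine ⟨Function.update ρ x a, ⟨hupd ρ a h1, ?_, ?_⟩, ?_⟩
    · intro p hp hp'
      have hpx : p ≠ x := by rintro rfl; exact hp' hx
      rw [← hoff ρ a p hpx]
      exact h3 p hp (fun h => hp' (mem_dropVar.1 h).1)
    · rw [hE, l1]
      constructor
      · rw [← mon_congr l2 (hoff ρ a), ← ev_congr s l3 (hoff ρ a), Function.update_self, hae,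
          sub_self]
      · refine (subAll_ev hxp c m s Us.prod (fun p hp => (hoff ρ a p hp).symm) ?_
          (mon_prod_ne hI.pu _ h1) (hm _ h1) _ _ hs).2 h4
        rw [Function.update_self, hae]
    · simp only [Function.update_idem]
      rw [← hx0]; simp

theorem ncard_resub {Us Fr : List ℕ} (hI : Inv Us Fr) {E E' : List Pol} {p s : Pol}
    {x : ℕ} (hx : x ∈ Fr) {c : ℤ} {m : ℕ} (h2 : (2 : F) ≠ 0)
    (hl : linIn x Us.prod p = some (c, m, s))
    (hs : subAll x c m ((1, x) :: s) Us.prod E = some E') :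
    (Sol F Us Fr E).ncard = (Sol F Us Fr E').ncard := by
  classical
  have hxp := hI.pf x hx
  have hu : x ∉ Us := fun h => hI.dj x h hx
  obtain ⟨l1, l2, l3, l4, l5⟩ := linIn_spec h2 hxp hl
  have hm : ∀ ρ : ℕ → F, (∀ p ∈ Us, ρ p ≠ 0) → (c : F) * mon ρ m ≠ 0 := fun ρ hρ =>
    mul_ne_zero l5 (mon_ne_zero_of_dvd ρ (mon_prod_ne hI.pu ρ hρ) l4)
  have hupd : ∀ (ρ : ℕ → F) a, (∀ p ∈ Us, ρ p ≠ 0) → ∀ p ∈ Us, Function.update ρ x a p ≠ 0 := by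
    intro ρ a h p hp
    have : p ≠ x := by rintro rfl; exact hu hp
    rw [Function.update_of_ne this]; exact h p hp
  have hupd' : ∀ (ρ : ℕ → F) a, (∀ p, p ∉ Us → p ∉ Fr → ρ p = 0) →
      ∀ p, p ∉ Us → p ∉ Fr → Function.update ρ x a p = 0 := by
    intro ρ a h p hp hp'
    have : p ≠ x := by rintro rfl; exact hp' hx
    rw [Function.update_of_ne this]; exact h p hp hp'
  have hoff : ∀ (ρ : ℕ → F) a p, p ≠ x → ρ p = Function.update ρ x a p := by
    intro ρ a p hp; rw [Function.update_of_ne hp]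
  refine Set.ncard_congr
    (fun ρ _ => Function.update ρ x ((c : F) * mon ρ m * ρ x - ev ρ s)) ?_ ?_ ?_
  · rintro ρ ⟨h1, h3, h4⟩
    set a : F := (c : F) * mon ρ m * ρ x - ev ρ s with ha
    refine ⟨hupd ρ a h1, hupd' ρ a h3, ?_⟩
    refine (subAll_ev hxp c m _ Us.prod (hoff ρ a) ?_ (mon_prod_ne hI.pu _ (hupd ρ a h1))
        (hm _ (hupd ρ a h1)) _ _ hs).1 h4
    rw [ev_cons, mon_prime _ hxp, ← mon_congr l2 (hoff ρ a), ← ev_congr s l3 (hoff ρ a),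
      Function.update_self, ha]
    push_cast; ring
  · rintro ρ ρ' ⟨h1, h3, h4⟩ ⟨h1', h3', h4'⟩ h
    have hag : ∀ p, p ≠ x → ρ p = ρ' p := by
      intro p hp
      have := congrFun h p
      simpa [Function.update_of_ne hp] using this
    funext p
    by_cases hpx : p = x
    · subst hpx
      have := congrFun h p
      simp only [Function.update_self] at this
      rw [← mon_congr l2 hag, ← ev_congr s l3 hag] at this
      apply mul_left_cancel₀ (hm ρ h1)
      linear_combination this
    · exact hag p hpx
  · rintro ρ ⟨h1, h3, h4⟩
    set a : F := (ρ x + ev ρ s) / ((c : F) * mon ρ m) with ha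
    have hae : (c : F) * mon ρ m * a = ρ x + ev ρ s := by rw [ha, mul_comm, div_mul_cancel₀ _ (hm ρ h1)]
    refine ⟨Function.update ρ x a, ⟨hupd ρ a h1, hupd' ρ a h3, ?_⟩, ?_⟩
    · refine (subAll_ev hxp c m _ Us.prod (fun p hp => (hoff ρ a p hp).symm) ?_
          (mon_prod_ne hI.pu _ h1) (hm _ h1) _ _ hs).2 h4
      rw [Function.update_self, hae, ev_cons, mon_prime _ hxp]
      push_cast; ring
    · rw [← mon_congr l2 (hoff ρ a), ← ev_congr s l3 (hoff ρ a), Function.update_self, hae,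
        Function.update_idem, add_sub_cancel_right, Function.update_eq_self]

def pe (v : ℤ) : List ℤ → ℤ
  | [] => 0
  | a :: l => a + v * pe v l

theorem pe_vadd (v : ℤ) : ∀ a b, pe v (vadd a b) = pe v a + pe v b
  | [], l => by simp [vadd, pe]
  | a :: l, [] => by simp [vadd, pe]
  | a :: l, b :: k => by simp only [vadd, pe, pe_vadd v l k]; ring

theorem pe_vneg (v : ℤ) (a : List ℤ) : pe v (vneg a) = - pe v a := by
  induction a with
  | nil => simp [vneg, pe]
  | cons b l ih =>
    have : vneg (b :: l) = (-b) :: vneg l := rfl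
    rw [this, pe, pe, ih]; ring

theorem pe_vq (v : ℤ) (n : ℕ) (a : List ℤ) : pe v (vq n a) = (v + 1) ^ n * pe v a := by
  induction n with
  | zero => simp [vq]
  | succ n ih => rw [vq, pe_vadd, pe, ih]; ring

theorem pe_vv (v : ℤ) (n : ℕ) (a : List ℤ) : pe v (vv n a) = v ^ n * pe v a := by
  induction n with
  | zero => simp [vv]
  | succ n ih => rw [vv, pe, ih]; ring

theorem Inv.drop {Us Fr : List ℕ} (h : Inv Us Fr) (x : ℕ) : Inv Us (dropVar x Fr) :=
  ⟨h.pu, fun p hp => h.pf p (mem_dropVar.1 hp).1, h.nu, h.nf.filter _,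
    fun p hp hp' => h.dj p hp (mem_dropVar.1 hp').1⟩

theorem Inv.dropU {Us Fr : List ℕ} (h : Inv Us Fr) (x : ℕ) : Inv (dropVar x Us) Fr :=
  ⟨fun p hp => h.pu p (mem_dropVar.1 hp).1, h.pf, h.nu.filter _, h.nf,
    fun p hp hp' => h.dj p (mem_dropVar.1 hp).1 hp'⟩

theorem Inv.toU {Us Fr : List ℕ} (h : Inv Us Fr) {x : ℕ} (hx : x ∈ Fr) :
    Inv (x :: Us) (dropVar x Fr) := by
  refine ⟨?_, (h.drop x).pf, List.nodup_cons.2 ⟨fun hu => h.dj x hu hx, h.nu⟩, (h.drop x).nf, ?_⟩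
  · intro p hp
    rcases List.mem_cons.1 hp with rfl | hp
    · exact h.pf p hx
    · exact h.pu p hp
  · intro p hp
    rcases List.mem_cons.1 hp with rfl | hp
    · simp [mem_dropVar]
    · exact (h.drop x).dj p hp

theorem Inv.toF {Us Fr : List ℕ} (h : Inv Us Fr) {x : ℕ} (hx : x ∈ Us) :
    Inv (dropVar x Us) (x :: Fr) := by
  refine ⟨(h.dropU x).pu, ?_, (h.dropU x).nu, List.nodup_cons.2 ⟨h.dj x hx, h.nf⟩, ?_⟩
  · intro p hp
    rcases List.mem_cons.1 hp with rfl | hp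
    · exact h.pu p hx
    · exact h.pf p hp
  · intro p hp hp'
    rcases List.mem_cons.1 hp' with rfl | hp'
    · exact (mem_dropVar.1 hp).2 rfl
    · exact (h.dropU x).dj p hp hp'

theorem Sol_congr {Us Us' Fr Fr' : List ℕ} {E : List Pol} (h1 : ∀ p, p ∈ Us ↔ p ∈ Us')
    (h2 : ∀ p, p ∈ Fr ↔ p ∈ Fr') : Sol F Us Fr E = Sol F Us' Fr' E := by
  unfold Sol; simp only [h1, h2]

theorem run_sound [Finite F] (h2 : (2 : F) ≠ 0) (v : ℤ) (hv : v = ({a : F | a ≠ 0}).ncard)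
    (t : Cert) : ∀ (Us Fr : List ℕ) (E : List Pol) (l : List ℤ), Inv Us Fr →
      run t Us Fr E = some l → ((Sol F Us Fr E).ncard : ℤ) = (v + 1) ^ 24 * pe v l := by
  induction t with
  | L =>
    intro Us Fr E l hI hr
    unfold run at hr
    cases hb : (E.all List.isEmpty && Nat.ble 24 Fr.length)
    · rw [hb] at hr; simp at hr
    · rw [hb] at hr
      simp only [cond_true, Option.some.injEq] at hr
      subst hr
      rw [Bool.and_eq_true, List.all_eq_true] at hb
      have hlen := Nat.le_of_ble_eq_true hb.2
      have : Sol F Us Fr E = Sol F Us Fr [] := by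
        ext ρ
        simp only [Sol, Set.mem_ofPred_eq]
        apply and_congr_right; intro _
        apply and_congr_right; intro _
        constructor
        · intro _; simp
        · intro _ e he
          rw [List.isEmpty_iff.1 (hb.1 e he), ev_nil]
      rw [this, ncard_leaf Fr Us hI, pe_vv, pe_vq]
      push_cast
      rw [← hv]
      have h3 : Fr.length = 24 + (Fr.length - 24) := by omega
      conv_lhs => rw [h3, pow_add]
      simp only [pe]; ring
  | S e y t ih =>
    intro Us Fr E l hI hr
    unfold run at hr
    cases h1 : linIn y Us.prod (E.getD e []) with
    | none => simp only [h1] at hr; exact absurd hr (by simp)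
    | some r =>
      obtain ⟨c, m, s⟩ := r
      simp only [h1] at hr
      cases h3 : memb y Fr
      · simp [h3] at hr
      · simp only [h3, cond_true] at hr
        cases h4 : subAll y c m s Us.prod (E.eraseIdx e) with
        | none => simp [h4] at hr
        | some E' =>
          simp only [h4] at hr
          have hy := memb_iff.1 h3
          rw [ncard_solve hI hy h2 h1 ?_ h4]
          · exact ih _ _ _ _ (hI.drop y) hr
          · intro P
            have he : e < E.length := by
              by_contra hcon
              rw [List.getD_eq_default _ _ (by omega)] at h1
              simp [linIn, coefOf] at h1
            have hp : E.Perm (E[e] :: E.eraseIdx e) := (List.getElem_cons_eraseIdx_perm he).symm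
            have hg : E.getD e [] = E[e] := by simp [List.getD, he]
            rw [hg, ← List.forall_mem_cons]
            exact forall_congr' fun a => by rw [hp.mem_iff]
  | R e y x t ih =>
    intro Us Fr E l hI hr
    unfold run at hr
    cases h1 : linIn x Us.prod (pnorm Us.prod (coefOf y (E.getD e []))) with
    | none => simp only [h1] at hr; exact absurd hr (by simp)
    | some r =>
      obtain ⟨c, m, s⟩ := r
      simp only [h1] at hr
      cases h3 : memb x Fr
      · simp [h3] at hr
      · simp only [h3, cond_true] at hr
        cases h4 : subAll x c m ((1, x) :: s) Us.prod E with
        | none => simp [h4] at hr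
        | some E' =>
          simp only [h4] at hr
          rw [ncard_resub hI (memb_iff.1 h3) h2 h1 h4]
          exact ih _ _ _ _ hI hr
  | X x t u iht ihu =>
    intro Us Fr E l hI hr
    unfold run at hr
    cases h3 : memb x Fr
    · simp [h3] at hr
    · simp only [h3, cond_true] at hr
      have hx := memb_iff.1 h3
      have hu : x ∉ Us := fun h => hI.dj x h hx
      cases ha : run t Us (dropVar x Fr) (zeroAll x E) with
      | none => simp [ha] at hr
      | some a =>
        cases hb : run u (x :: Us) (dropVar x Fr) E with
        | none => simp [ha, hb] at hr
        | some b =>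
          simp only [ha, hb, Option.some.injEq] at hr
          subst hr
          have e1 := iht _ _ _ _ (hI.drop x) ha
          have e2 := ihu _ _ _ _ (hI.toU hx) hb
          rw [Sol_zero (hI.pf x hx) hu (by simp [mem_dropVar])] at e1
          rw [ncard_split hx hu]
          push_cast
          rw [e1, e2, pe_vadd]; ring
  | D x t u iht ihu =>
    intro Us Fr E l hI hr
    unfold run at hr
    cases h3 : memb x Us
    · simp [h3] at hr
    · simp only [h3, cond_true] at hr
      have hx := memb_iff.1 h3
      have hf : x ∉ Fr := hI.dj x hx
      cases ha : run t (dropVar x Us) Fr (zeroAll x E) with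
      | none => simp [ha] at hr
      | some a =>
        cases hb : run u (dropVar x Us) (x :: Fr) E with
        | none => simp [ha, hb] at hr
        | some b =>
          simp only [ha, hb, Option.some.injEq] at hr
          subst hr
          have hxd : x ∉ dropVar x Us := by simp [mem_dropVar]
          have e1 := iht _ _ _ _ (hI.dropU x) ha
          have e2 := ihu _ _ _ _ (hI.toF hx) hb
          rw [Sol_zero (hI.pu x hx) hxd hf] at e1
          rw [ncard_split (x := x) (by simp) hxd] at e2
          have d1 : ∀ p, p ∈ dropVar x (x :: Fr) ↔ p ∈ Fr := by
            intro p; simp only [mem_dropVar, List.mem_cons]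
            constructor
            · rintro ⟨h | h, h'⟩
              · exact absurd h h'
              · exact h
            · intro h; exact ⟨Or.inr h, by rintro rfl; exact hf h⟩
          have d2 : ∀ p, p ∈ x :: dropVar x Us ↔ p ∈ Us := by
            intro p; simp only [mem_dropVar, List.mem_cons]
            constructor
            · rintro (rfl | h)
              · exact hx
              · exact h.1
            · intro h
              by_cases hp : p = x
              · exact Or.inl hp
              · exact Or.inr ⟨h, hp⟩
          rw [Sol_congr (fun _ => Iff.rfl) d1, Sol_congr d2 d1] at e2
          push_cast at e2
          rw [pe_vadd, pe_vneg]
          linear_combination e2 - e1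

end Sound
def T : List (ℕ × ℕ × ℕ × ℤ) := [
  (0,1,5,1), (0,6,9,1), (0,10,13,1), (0,14,16,1), (0,17,19,1), (0,20,21,1), (0,22,23,1),
  (0,23,24,2), (1,0,5,-1), (1,2,6,1), (1,7,10,1), (1,11,14,1), (1,15,17,1), (1,18,20,1),
  (1,20,22,2), (1,21,23,1), (2,1,6,-1), (2,3,7,1), (2,5,9,-1), (2,8,11,1), (2,12,15,1),
  (2,15,18,2), (2,17,20,1), (2,19,21,1), (3,2,7,-1), (3,4,8,1), (3,6,10,-1), (3,8,12,2),
  (3,9,13,-1), (3,11,15,1), (3,14,17,1), (3,16,19,1), (4,3,8,-1), (4,7,11,-1), (4,10,14,-1),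
  (4,13,16,-1), (5,2,9,1), (5,7,13,1), (5,11,16,1), (5,15,19,1), (5,18,21,1), (5,20,23,1),
  (5,21,24,2), (6,0,9,-1), (6,3,10,1), (6,8,14,1), (6,12,17,1), (6,15,20,1), (6,17,22,2),
  (6,19,23,1), (7,1,10,-1), (7,4,11,1), (7,5,13,-1), (7,8,15,1), (7,11,18,2), (7,14,20,1),
  (7,16,21,1), (8,2,11,-1), (8,3,12,-2), (8,6,14,-1), (8,7,15,-1), (8,9,16,-1), (8,10,17,-1),
  (8,13,19,-1), (9,3,13,1), (9,8,16,1), (9,12,19,1), (9,15,21,1), (9,17,23,1), (9,19,24,2),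
  (10,0,13,-1), (10,4,14,1), (10,8,17,1), (10,11,20,1), (10,14,22,2), (10,16,23,1), (11,1,14,-1),
  (11,3,15,-1), (11,5,16,-1), (11,7,18,-2), (11,10,20,-1), (11,13,21,-1), (12,2,15,-1),
  (12,6,17,-1), (12,9,19,-1), (13,4,16,1), (13,8,19,1), (13,11,21,1), (13,14,23,1), (13,16,24,2),
  (14,0,16,-1), (14,3,17,-1), (14,7,20,-1), (14,10,22,-2), (14,13,23,-1), (15,1,17,-1),
  (15,2,18,-2), (15,5,19,-1), (15,6,20,-1), (15,9,21,-1), (16,3,19,-1), (16,7,21,-1),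
  (16,10,23,-1), (16,13,24,-2), (17,0,19,-1), (17,2,20,-1), (17,6,22,-2), (17,9,23,-1),
  (18,1,20,-1), (18,5,21,-1), (19,2,21,-1), (19,6,23,-1), (19,9,24,-2), (20,0,21,-1),
  (20,1,22,-2), (20,5,23,-1), (21,1,23,-1), (21,5,24,-2), (22,0,23,-1), (23,0,24,-2)]
def prs : List ℕ := [2, 3, 5, 7, 11, 13, 17, 19, 23, 29, 31, 37, 41, 43, 47, 53, 59, 61, 67, 71, 73, 79, 83, 89, 97, 101, 103, 107, 109, 113, 127, 131, 137, 139, 149, 151, 157, 163, 167, 173, 179, 181, 191, 193, 197, 199, 211, 223, 227, 229]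
def cert : Cert :=
  .X 2 (.X 3 (.X 5 (.X 7 (.X 11 (.X 13 (.X 17 (.X 19 (.X 23 (.X 29 (.X 31 (.X 37 (.X 41 (.X 43 (.X
  47 (.X 53 (.X 59 (.X 61 (.X 67 (.X 71 .L <| .S 0 103 <| .S 0 101 .L) <| .S 2 103 <| .S 0 107 .L)
  <| .S 3 107 <| .S 2 109 <| .X 71 .L <| .S 0 103 <| .S 0 101 .L) <| .S 4 109 <| .S 3 113 <| .X 67
  (.X 71 .L <| .S 0 103 <| .S 0 101 .L) <| .S 2 103 <| .S 0 107 .L) <| .S 5 107 <| .S 5 101 <| .S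
  0 131 <| .S 0 127 <| .X 59 .L <| .S 0 113 <| .S 0 109 .L) <| .S 7 103 <| .S 1 137 <| .S 5 109 <|
  .S 2 131 <| .X 53 .L <| .S 3 107 <| .S 1 127 <| .X 59 .L <| .S 0 113 <| .S 0 101 .L) <| .S 8 107
  <| .S 4 137 <| .S 5 113 <| .S 2 139 <| .X 47 (.X 53 (.X 71 .L <| .S 0 103 <| .S 0 101 .L) <| .S
  2 101 <| .S 0 131 .L) <| .S 2 131 <| .S 2 109 <| .R 0 103 71 <| .X 71 .L <| .S 0 103 <| .S 0 101
  .L) <| .S 8 109 <| .S 3 139 <| .X 43 (.X 47 (.X 53 (.X 67 (.X 71 .L <| .S 0 103 <| .S 0 101 .L)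
  <| .S 2 103 <| .S 0 107 .L) <| .S 3 107 <| .S 3 101 <| .S 0 131 <| .S 0 127 .L) <| .S 5 103 <|
  .S 1 137 <| .X 53 .L <| .S 0 131 <| .S 0 127 <| .S 0 107 <| .S 0 101 .L) <| .S 3 137 <| .S 5 113
  <| .X 47 (.X 53 (.X 67 (.X 71 .L <| .S 0 103 <| .S 0 101 .L) <| .S 2 103 <| .S 0 107 .L) <| .S 3
  107 <| .S 3 101 <| .S 0 131 <| .S 0 127 .L) <| .S 4 107 <| .S 2 131 <| .R 0 103 71 <| .X 71 (.X
  53 .L <| .S 0 127 <| .S 0 101 .L) <| .S 1 101 <| .S 0 103 .L) <| .S 9 109 <| .S 9 101 <| .S 0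
  151 <| .S 4 137 <| .S 2 149 <| .S 3 127 <| .X 43 (.R 0 107 67 <| .X 67 .L <| .S 0 107 <| .S 0
  103 .L) <| .S 3 107 <| .S 0 139 .L) <| .S 11 103 <| .S 1 157 <| .S 9 113 <| .S 3 151 <| .S 4 139
  <| .S 5 131 <| .X 37 (.X 53 (.R 0 109 61 <| .X 61 .L <| .S 0 109 <| .S 0 107 .L) <| .S 3 107 <|
  .S 1 127 <| .X 41 .L <| .S 0 109 <| .S 0 101 .L) <| .S 5 109 <| .S 3 137 <| .S 2 127 <| .S 0 149
  .L) <| .S 12 107 <| .S 2 163 <| .S 10 109 <| .S 2 157 <| .S 6 137 <| .S 5 139 <| .X 31 (.X 37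
  (.X 53 (.X 71 .L <| .S 0 103 <| .S 0 101 .L) <| .S 2 101 <| .S 0 131 .L) <| .S 3 101 <| .S 0 151
  .L) <| .S 6 113 <| .S 2 151 <| .X 37 (.X 53 (.X 71 .L <| .S 0 103 <| .S 0 101 .L) <| .S 2 101 <|
  .S 0 131 .L) <| .S 4 103 <| .S 2 131 <| .S 0 149 <| .S 0 127 .L) <| .S 13 113 <| .S 13 101 <| .S
  0 173 <| .S 3 167 <| .S 7 139 <| .S 3 157 <| .S 6 127 <| .S 5 149 <| .X 29 (.R 0 137 47 <| .X 47
  (.R 1 109 61 <| .X 61 (.R 0 107 67 <| .X 67 .L <| .S 0 107 <| .S 0 103 .L) <| .S 2 107 <| .S 0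
  109 .L) <| .S 3 109 <| .S 3 103 <| .S 0 137 <| .S 0 131 .L) <| .S 5 107 <| .S 1 163 <| .R 0 137
  47 <| .X 47 .L <| .S 0 137 <| .S 0 131 <| .S 0 109 <| .S 0 103 .L) <| .S 15 103 <| .S 1 179 <|
  .S 11 131 <| .S 5 163 <| .S 11 109 <| .S 2 173 <| .S 7 139 <| .S 5 151 <| .X 23 (.X 37 (.R 2 137
  43 <| .X 43 (.X 53 .L <| .S 2 107 <| .S 0 127 .L) <| .S 4 113 <| .S 2 137 <| .X 53 .L <| .S 2
  107 <| .S 0 127 .L) <| .S 3 137 <| .S 3 127 <| .R 0 107 43 <| .X 43 .L <| .S 0 107 <| .S 0 101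
  .L) <| .S 7 113 <| .S 5 127 <| .S 3 157 <| .S 2 167 <| .R 0 107 61 <| .X 61 .L <| .S 0 107 <| .S
  0 101 .L) <| .S 15 107 <| .S 2 179 <| .S 10 137 <| .S 6 157 <| .X 19 (.X 23 (.X 31 (.X 37 (.R 2
  139 41 <| .X 41 (.X 47 (.X 53 (.R 2 113 59 <| .X 59 (.X 71 .L <| .S 0 103 <| .S 0 101 .L) <| .S
  2 113 <| .S 2 109 <| .X 71 .L <| .S 0 103 <| .S 0 101 .L) <| .S 4 101 <| .S 0 131 <| .R 0 113 59
  <| .X 59 .L <| .S 0 113 <| .S 0 109 .L) <| .S 4 109 <| .S 2 131 <| .R 0 103 71 <| .X 71 (.X 29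
  (.X 53 .L <| .X 59 .L <| .S 0 113 <| .S 0 101 .L) <| .X 43 (.X 53 .L <| .X 59 .L <| .S 0 113 <|
  .S 0 101 .L) <| .X 53 .L <| .R 0 113 59 <| .X 59 .L <| .S 0 113 <| .S 0 101 .L) <| .S 1 101 <|
  .S 0 103 .L) <| .S 5 109 <| .S 2 139 <| .X 53 (.X 71 .L <| .S 0 103 <| .S 0 101 .L) <| .S 2 101
  <| .S 0 131 .L) <| .S 7 109 <| .S 4 101 <| .S 0 151 <| .S 0 149 .L) <| .S 8 113 <| .S 3 151 <|
  .S 4 139 <| .S 4 131 <| .X 37 (.R 0 103 71 <| .X 71 (.X 29 (.X 41 .L <| .X 53 .L <| .S 0 109 <|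
  .S 0 101 .L) <| .X 41 (.X 53 .L <| .S 0 109 <| .S 0 101 .L) <| .X 53 .L <| .D 17 (.S 0 109 <| .S
  0 101 .L) <| .R 0 109 17 <| .X 17 .L <| .S 0 109 <| .S 0 101 .L) <| .S 1 101 <| .S 0 103 .L) <|
  .S 4 109 <| .S 3 103 <| .S 1 149 <| .S 0 127 .L) <| .S 9 113 <| .S 9 101 <| .S 0 173 <| .S 2 167
  <| .S 5 139 <| .S 4 149 <| .R 0 127 47 <| .X 47 .L <| .S 2 103 <| .S 1 131 <| .S 1 109 <| .S 0
  127 .L) <| .S 9 131 <| .S 5 163 <| .S 9 109 <| .S 7 139 <| .S 5 151 <| .S 2 173 <| .X 23 (.R 1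
  127 53 <| .X 53 (.R 0 103 71 <| .X 71 .L <| .S 0 103 <| .S 0 101 .L) <| .S 2 103 <| .S 0 127 .L)
  <| .S 5 113 <| .S 2 167 <| .R 1 127 47 <| .X 47 (.R 0 103 61 <| .X 61 .L <| .S 0 103 <| .S 0 101
  .L) <| .S 2 103 <| .S 0 127 .L) <| .S 16 109 <| .S 16 101 <| .S 9 163 <| .S 0 191 <| .S 10 149
  <| .S 2 181 <| .S 9 139 <| .S 9 127 <| .S 3 179 <| .S 5 167 <| .X 17 (.R 0 157 31 <| .X 31 (.R 2
  137 43 <| .X 43 (.R 0 137 47 <| .X 47 (.R 0 107 67 <| .X 67 .L <| .S 0 107 <| .S 0 103 .L) <| .S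
  2 103 <| .S 0 137 .L) <| .S 2 137 <| .S 2 113 <| .R 0 107 67 <| .X 67 .L <| .S 0 107 <| .S 0 103
  .L) <| .S 5 113 <| .S 4 103 <| .S 0 157 <| .S 0 151 .L) <| .S 6 137 <| .S 4 157 <| .R 2 151 31
  <| .X 31 (.R 0 107 67 <| .X 67 .L <| .S 0 107 <| .S 0 103 .L) <| .S 4 113 <| .S 2 151 <| .R 0
  107 67 <| .X 67 .L <| .S 0 107 <| .S 0 103 .L) <| .S 18 103 <| .S 1 193 <| .S 16 107 <| .S 1 191
  <| .S 12 137 <| .S 12 131 <| .S 4 179 <| .S 4 173 <| .S 6 157 <| .S 6 151 <| .X 13 (.X 23 (.X 37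
  (.R 0 139 41 <| .X 41 (.R 0 113 59 <| .X 59 .L <| .S 0 113 <| .S 0 109 .L) <| .S 2 109 <| .S 0
  139 .L) <| .S 5 109 <| .S 0 149 .L) <| .S 6 113 <| .S 2 167 <| .S 4 139 <| .S 1 149 .L) <| .S 8
  109 <| .S 5 163 <| .S 6 139 <| .S 3 149 <| .S 2 167 <| .S 0 181 .L) <| .S 19 107 <| .S 19 101 <|
  .S 0 199 <| .S 16 127 <| .S 4 193 <| .S 1 197 <| .S 13 137 <| .S 4 181 <| .S 5 179 <| .S 8 157
  <| .S 9 149 <| .S 6 167 <| .R 1 173 19 <| .X 19 (.R 2 151 31 <| .X 31 (.R 1 139 41 <| .X 41 (.R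
  1 131 47 <| .X 47 (.R 0 113 59 <| .X 59 .L <| .S 0 113 <| .S 0 109 .L) <| .S 3 109 <| .S 0 131
  .L) <| .S 4 109 <| .S 0 139 .L) <| .S 5 113 <| .S 2 151 <| .S 2 139 <| .S 1 131 .L) <| .S 7 109
  <| .S 3 163 <| .S 5 131 <| .S 3 151 <| .S 1 173 <| .S 1 139 .L) <| .S 20 103 <| .S 1 199 <| .S
  16 131 <| .S 5 191 <| .S 12 151 <| .S 8 173 <| .X 7 (.X 13 (.R 1 179 17 <| .X 17 (.X 23 (.R 1
  163 29 <| .X 29 (.X 37 (.R 2 139 41 <| .X 41 (.R 1 139 43 <| .X 43 (.X 53 (.R 1 113 59 <| .X 59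
  (.R 0 109 61 <| .X 61 .L <| .S 0 109 <| .S 0 107 .L) <| .S 2 109 <| .S 0 113 .L) <| .S 4 107 <|
  .S 0 127 <| .R 0 113 59 <| .X 59 .L <| .S 0 113 <| .S 0 109 .L) <| .S 5 113 <| .S 5 107 <| .S 1
  137 <| .S 0 139 .L) <| .S 6 109 <| .S 2 139 <| .R 2 137 43 <| .X 43 (.X 53 .L <| .S 2 107 <| .S
  0 127 .L) <| .S 4 113 <| .S 2 137 <| .X 53 .L <| .S 2 107 <| .S 0 127 .L) <| .S 7 109 <| .S 4
  137 <| .S 3 127 <| .S 1 149 <| .R 0 139 43 <| .X 43 .L <| .S 2 107 <| .S 0 139 .L) <| .S 8 109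
  <| .S 7 107 <| .S 6 137 <| .S 0 163 <| .S 0 157 <| .S 0 139 .L) <| .S 10 113 <| .S 3 167 <| .S 3
  157 <| .S 5 139 <| .S 4 127 <| .S 2 149 <| .R 0 163 29 <| .X 29 (.R 0 109 61 <| .X 61 .L <| .S 0
  109 <| .S 0 107 .L) <| .S 2 107 <| .S 0 163 .L) <| .S 11 107 <| .S 1 179 <| .S 7 137 <| .S 4 157
  <| .X 23 (.X 37 (.R 0 139 41 <| .X 41 (.R 0 113 59 <| .X 59 .L <| .S 0 113 <| .S 0 109 .L) <| .S
  2 109 <| .S 0 139 .L) <| .S 5 109 <| .S 0 149 .L) <| .S 6 113 <| .S 2 167 <| .S 4 139 <| .S 1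
  149 .L) <| .S 12 109 <| .S 7 163 <| .S 8 149 <| .S 8 139 <| .S 2 181 <| .S 3 179 <| .S 5 127 <|
  .S 3 167 <| .R 2 157 17 <| .X 17 (.R 1 137 43 <| .X 43 .L <| .S 2 113 <| .S 0 137 .L) <| .S 3
  137 <| .S 1 157 .L) <| .S 14 107 <| .S 13 127 <| .S 11 149 <| .S 4 193 <| .S 9 137 <| .S 1 197
  <| .S 5 179 <| .S 6 157 <| .S 4 167 <| .S 2 181 <| .R 0 139 41 <| .X 41 (.R 0 113 59 <| .X 59 .L
  <| .S 0 113 <| .S 0 109 .L) <| .S 2 109 <| .S 0 139 .L) <| .S 21 103 <| .S 21 101 <| .S 20 127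
  <| .S 0 223 <| .S 0 211 <| .S 3 199 <| .S 15 131 <| .S 3 197 <| .S 12 151 <| .S 12 149 <| .S 5
  191 <| .S 5 181 <| .S 7 173 <| .S 7 167 <| .R 0 179 17 <| .X 17 (.R 0 163 29 <| .X 29 (.R 1 139
  41 <| .X 41 (.R 0 139 43 <| .X 43 (.R 1 113 59 <| .X 59 (.R 0 109 61 <| .X 61 .L <| .S 0 109 <|
  .S 0 107 .L) <| .S 2 109 <| .S 0 113 .L) <| .S 3 113 <| .S 3 107 <| .S 0 139 <| .S 0 137 .L) <|
  .S 4 109 <| .S 1 139 <| .R 1 137 43 <| .X 43 .L <| .S 2 113 <| .S 0 137 .L) <| .S 5 109 <| .S 5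
  107 <| .S 4 137 <| .S 0 163 <| .S 0 157 <| .S 0 139 .L) <| .S 7 107 <| .S 0 179 <| .S 4 137 <|
  .S 2 157 <| .R 0 139 41 <| .X 41 (.R 0 113 59 <| .X 59 .L <| .S 0 113 <| .S 0 109 .L) <| .S 2
  109 <| .S 0 139 .L) <| .S 23 101 <| .S 0 227 <| .S 20 127 <| .S 4 211 <| .S 17 149 <| .S 7 197
  <| .S 13 167 <| .S 10 181 <| .R 0 199 5 <| .X 5 (.R 0 193 11 <| .X 11 (.R 1 179 17 <| .X 17 (.R
  0 179 19 <| .X 19 (.R 1 163 29 <| .X 29 (.R 0 157 31 <| .X 31 (.R 2 139 41 <| .X 41 (.R 1 139 43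
  <| .X 43 (.R 0 137 47 <| .X 47 (.R 2 113 59 <| .X 59 (.R 1 109 61 <| .X 61 (.R 0 107 67 <| .X 67
  .L <| .S 0 107 <| .S 0 103 .L) <| .S 2 107 <| .S 0 109 .L) <| .S 3 109 <| .S 2 113 <| .R 0 107
  67 <| .X 67 .L <| .S 0 107 <| .S 0 103 .L) <| .S 4 109 <| .S 3 103 <| .S 0 137 <| .S 0 131 .L)
  <| .S 6 107 <| .S 1 139 <| .S 2 137 <| .S 3 113 <| .R 1 131 47 <| .X 47 .L <| .S 2 109 <| .S 0
  131 .L) <| .S 6 109 <| .S 2 139 <| .R 2 137 43 <| .X 43 (.R 0 137 47 <| .X 47 (.R 0 107 67 <| .X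
  67 .L <| .S 0 107 <| .S 0 103 .L) <| .S 2 103 <| .S 0 137 .L) <| .S 2 137 <| .S 3 113 <| .R 1
  131 47 <| .X 47 (.R 0 107 67 <| .X 67 .L <| .S 0 107 <| .S 0 103 .L) <| .S 2 107 <| .S 0 131 .L)
  <| .S 7 113 <| .S 7 103 <| .S 0 157 <| .S 2 151 <| .S 2 139 <| .S 2 131 <| .R 0 109 61 <| .X 61
  .L <| .S 0 109 <| .S 0 107 .L) <| .S 9 107 <| .S 1 163 <| .S 7 109 <| .S 1 157 <| .S 3 139 <| .S
  3 137 <| .R 1 151 31 <| .X 31 .L <| .S 3 113 <| .S 0 151 .L) <| .S 10 109 <| .S 10 103 <| .S 0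
  179 <| .S 3 163 <| .S 1 173 <| .S 5 131 <| .S 4 139 <| .S 3 151 <| .R 1 137 43 <| .X 43 .L <| .S
  2 113 <| .S 0 137 .L) <| .S 11 107 <| .S 1 179 <| .S 7 137 <| .S 4 157 <| .R 1 173 19 <| .X 19
  (.R 2 151 31 <| .X 31 (.R 1 139 41 <| .X 41 (.R 1 131 47 <| .X 47 (.R 0 113 59 <| .X 59 .L <| .S
  0 113 <| .S 0 109 .L) <| .S 3 109 <| .S 0 131 .L) <| .S 4 109 <| .S 0 139 .L) <| .S 5 113 <| .S
  2 151 <| .S 2 139 <| .S 1 131 .L) <| .S 7 109 <| .S 3 163 <| .S 5 131 <| .S 3 151 <| .S 1 173 <|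
  .S 1 139 .L) <| .S 12 107 <| .S 12 103 <| .S 11 131 <| .S 0 193 <| .S 0 191 <| .S 2 179 <| .S 6
  137 <| .S 2 173 <| .S 3 157 <| .S 3 151 <| .R 0 139 41 <| .X 41 (.R 0 113 59 <| .X 59 .L <| .S 0
  113 <| .S 0 109 .L) <| .S 2 109 <| .S 0 139 .L) <| .S 14 103 <| .S 0 199 <| .S 11 131 <| .S 3
  191 <| .S 8 151 <| .S 5 173 <| .R 0 179 17 <| .X 17 (.R 0 163 29 <| .X 29 (.R 1 139 41 <| .X 41
  (.R 0 139 43 <| .X 43 (.R 1 113 59 <| .X 59 (.R 0 109 61 <| .X 61 .L <| .S 0 109 <| .S 0 107 .L)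
  <| .S 2 109 <| .S 0 113 .L) <| .S 3 113 <| .S 3 107 <| .S 0 139 <| .S 0 137 .L) <| .S 4 109 <|
  .S 1 139 <| .R 1 137 43 <| .X 43 .L <| .S 2 113 <| .S 0 137 .L) <| .S 5 109 <| .S 5 107 <| .S 4
  137 <| .S 0 163 <| .S 0 157 <| .S 0 139 .L) <| .S 7 107 <| .S 0 179 <| .S 4 137 <| .S 2 157 <|
  .R 0 139 41 <| .X 41 (.R 0 113 59 <| .X 59 .L <| .S 0 113 <| .S 0 109 .L) <| .S 2 109 <| .S 0
  139 .L
def NN : ℕ := 25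
def pf (k : ℕ) : ℕ := prs.getD (NN - 1 - k) 0
def py (j : ℕ) : ℕ := prs.getD (NN + j) 0
def eqn (i : ℕ) : Pol :=
  (T.filter fun t => Nat.beq t.1 i).map fun t => (t.2.2.2, pf t.2.2.1 * py t.2.1)
def eqs : List Pol := (List.range NN).map eqn

section Ident
variable {F : Type*} [Field F]

def ix (n : ℕ) : Fin 25 := Fin.ofNat 25 n

def ML (L : List (ℕ × ℕ × ℕ × ℤ)) (y : Fin 25 → F) : Matrix (Fin 25) (Fin 25) F := fun i k =>
  (L.map fun t => if ix t.1 = i ∧ ix t.2.2.1 = k then (t.2.2.2 : F) * y (ix t.2.1) else 0).sum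

theorem ML_vecMul (L : List (ℕ × ℕ × ℕ × ℤ)) (x y : Fin 25 → F) (k : Fin 25) :
    (Matrix.vecMul x (ML L y)) k = (L.map fun t =>
      if ix t.2.2.1 = k then (t.2.2.2 : F) * (x (ix t.1) * y (ix t.2.1)) else 0).sum := by
  simp only [Matrix.vecMul, dotProduct]
  induction L with
  | nil => simp [ML]
  | cons t L ih =>
    have : ∀ i, ML (t :: L) y i k = (if ix t.1 = i ∧ ix t.2.2.1 = k then
      (t.2.2.2 : F) * y (ix t.2.1) else 0) + ML L y i k := by intro i; simp [ML]
    simp only [this, mul_add, Finset.sum_add_distrib, List.map_cons, List.sum_cons, ih]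
    congr 1
    by_cases h : ix t.2.2.1 = k
    · simp [h]; ring
    · simp [h]

theorem ML_mulVec (L : List (ℕ × ℕ × ℕ × ℤ)) (y f : Fin 25 → F) (i : Fin 25) :
    (Matrix.mulVec (ML L y) f) i = (L.map fun t =>
      if ix t.1 = i then (t.2.2.2 : F) * (f (ix t.2.2.1) * y (ix t.2.1)) else 0).sum := by
  simp only [Matrix.mulVec, dotProduct]
  induction L with
  | nil => simp [ML]
  | cons t L ih =>
    have : ∀ k, ML (t :: L) y i k = (if ix t.1 = i ∧ ix t.2.2.1 = k then
      (t.2.2.2 : F) * y (ix t.2.1) else 0) + ML L y i k := by intro k; simp [ML]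
    simp only [this, add_mul, Finset.sum_add_distrib, List.map_cons, List.sum_cons, ih]
    congr 1
    by_cases h : ix t.1 = i
    · simp [h]; ring
    · simp [h]

theorem prs_prime : ∀ p ∈ prs, p.Prime := by
  unfold prs
  simp only [List.forall_mem_cons]
  norm_num

theorem inv_start : Inv [] prs := by
  refine ⟨by simp, prs_prime, by simp, by decide +kernel, by simp⟩

theorem pf_mem : ∀ k : Fin 25, pf k ∈ prs := by decide +kernel
theorem py_mem : ∀ k : Fin 25, py k ∈ prs := by decide +kernel
theorem pf_idx : ∀ k : Fin 25, prs.idxOf (pf k) = 24 - k := by decide +kernel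
theorem py_idx : ∀ k : Fin 25, prs.idxOf (py k) = 25 + k := by decide +kernel
theorem prs_cover : ∀ p ∈ prs, (∃ k : Fin 25, pf k = p) ∨ ∃ k : Fin 25, py k = p := by
  decide +kernel
theorem T_bd : ∀ t ∈ T, t.1 < 25 ∧ t.2.1 < 25 ∧ t.2.2.1 < 25 := by decide +kernel

theorem ix_val {n : ℕ} (h : n < 25) : ((ix n : Fin 25) : ℕ) = n := Nat.mod_eq_of_lt h

theorem ev_eqn_aux (ρ : ℕ → F) (i : Fin 25) (L : List (ℕ × ℕ × ℕ × ℤ))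
    (hL : ∀ t ∈ L, t.1 < 25 ∧ t.2.1 < 25 ∧ t.2.2.1 < 25) :
    ev ρ ((L.filter fun t => Nat.beq t.1 i).map fun t => (t.2.2.2, pf t.2.2.1 * py t.2.1)) =
      (L.map fun t => if ix t.1 = i then (t.2.2.2 : F) *
        (ρ (pf (ix t.2.2.1)) * ρ (py (ix t.2.1))) else 0).sum := by
  induction L with
  | nil => simp [ev]
  | cons t L ih =>
    obtain ⟨h1, h2, h3⟩ := hL t (by simp)
    have ih := ih (fun s hs => hL s (by simp [hs]))
    rw [List.map_cons, List.sum_cons, ← ih, List.filter_cons]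
    by_cases h : t.1 = (i : ℕ)
    · have hb : Nat.beq t.1 i = true := by rw [h]; exact Nat.beq_refl _
      have hi : ix t.1 = i := by apply Fin.ext; rw [ix_val h1, h]
      rw [if_pos hb, if_pos hi, List.map_cons, ev_cons, mon_mul]
      have e1 := mon_prime ρ (prs_prime _ (pf_mem (ix t.2.2.1)))
      have e2 := mon_prime ρ (prs_prime _ (py_mem (ix t.2.1)))
      rw [ix_val h2] at e2 ⊢
      rw [ix_val h3] at e1 ⊢
      simp only [e1, e2]
    · have hb : ¬ Nat.beq t.1 i = true := fun hh => h (Nat.eq_of_beq_eq_true hh)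
      have hi : ¬ ix t.1 = i := fun hh => h (by rw [← hh, ix_val h1])
      rw [if_neg hb, if_neg hi, zero_add]

theorem ev_eqn (ρ : ℕ → F) (i : Fin 25) : ev ρ (eqn i) =
    (Matrix.mulVec (ML T (fun j => ρ (py j))) (fun k => ρ (pf k))) i := by
  rw [ML_mulVec]
  exact ev_eqn_aux ρ i T T_bd

theorem mem_Sol (ρ : ℕ → F) : ρ ∈ Sol F [] prs eqs ↔ (∀ p, p ∉ prs → ρ p = 0) ∧
    Matrix.mulVec (ML T (fun j => ρ (py j))) (fun k => ρ (pf k)) = 0 := by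
  unfold Sol
  simp only [Set.mem_ofPred_eq, List.not_mem_nil, false_imp_iff, implies_true, true_and,
    not_false_iff, true_imp_iff]
  apply and_congr_right; intro _
  constructor
  · intro h
    funext i
    rw [← ev_eqn]
    exact h _ (List.mem_map_of_mem (List.mem_range.2 i.2))
  · intro h e he
    obtain ⟨i, hi, rfl⟩ := List.mem_map.1 he
    have := ev_eqn ρ ⟨i, List.mem_range.1 hi⟩
    rw [h] at this
    exact this

theorem ncard_Sol : (Sol F [] prs eqs).ncard =
    Nat.card {z : (Fin 25 → F) × (Fin 25 → F) // Matrix.mulVec (ML T z.1) z.2 = 0} := by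
  classical
  rw [← Nat.card_coe_set_eq]
  have hpf : ∀ (y f : Fin 25 → F) (k : Fin 25), (fun p => if p ∈ prs then
      (if prs.idxOf p < 25 then f (ix (24 - prs.idxOf p)) else y (ix (prs.idxOf p - 25)))
      else 0) (pf k) = f k := by
    intro y f k
    simp only [pf_mem, pf_idx, if_true]
    rw [if_pos (by omega)]
    congr 1; apply Fin.ext; rw [ix_val (by omega)]; omega
  have hpy : ∀ (y f : Fin 25 → F) (k : Fin 25), (fun p => if p ∈ prs then
      (if prs.idxOf p < 25 then f (ix (24 - prs.idxOf p)) else y (ix (prs.idxOf p - 25)))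
      else 0) (py k) = y k := by
    intro y f k
    simp only [py_mem, py_idx, if_true]
    rw [if_neg (by omega)]
    congr 1; apply Fin.ext; rw [ix_val (by omega)]; omega
  refine Nat.card_congr (Equiv.ofBijective
    (fun ρ => ⟨(fun j => ρ.1 (py j), fun k => ρ.1 (pf k)), ((mem_Sol ρ.1).1 ρ.2).2⟩) ⟨?_, ?_⟩)
  · rintro ⟨ρ, h⟩ ⟨ρ', h'⟩ hh
    rw [Subtype.mk.injEq, Prod.mk.injEq] at hh
    apply Subtype.ext
    funext p
    show ρ p = ρ' p
    by_cases hp : p ∈ prs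
    · rcases prs_cover p hp with ⟨k, rfl⟩ | ⟨k, rfl⟩
      · exact congrFun hh.2 k
      · exact congrFun hh.1 k
    · rw [((mem_Sol ρ).1 h).1 p hp, ((mem_Sol ρ').1 h').1 p hp]
  · rintro ⟨⟨y, f⟩, h⟩
    refine ⟨⟨fun p => if p ∈ prs then
      (if prs.idxOf p < 25 then f (ix (24 - prs.idxOf p)) else y (ix (prs.idxOf p - 25)))
      else 0, (mem_Sol _).2 ⟨fun p hp => if_neg hp, ?_⟩⟩, ?_⟩
    · simp only [hpf, hpy]; exact h
    · apply Subtype.ext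
      simp only [hpf, hpy]

theorem card_ker_transpose [Fintype F] {n : ℕ} (M : Matrix (Fin n) (Fin n) F) :
    Nat.card {x : Fin n → F // Matrix.vecMul x M = 0} =
      Nat.card {x : Fin n → F // Matrix.mulVec M x = 0} := by
  have key : ∀ A : Matrix (Fin n) (Fin n) F, Nat.card {x : Fin n → F // Matrix.mulVec A x = 0} =
      Nat.card F ^ (n - A.rank) := by
    intro A
    have h := LinearMap.finrank_range_add_finrank_ker (Matrix.mulVecLin A)
    rw [Module.finrank_fin_fun] at h
    have h1 := Module.natCard_eq_pow_finrank (K := F) (V := LinearMap.ker (Matrix.mulVecLin A))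
    have h2 : n - A.rank = Module.finrank F (LinearMap.ker (Matrix.mulVecLin A)) := by
      unfold Matrix.rank; omega
    rw [h2, ← h1]
    rfl
  have e : ∀ x, Matrix.vecMul x M = Matrix.mulVec M.transpose x := fun x =>
    (Matrix.mulVec_transpose M x).symm
  simp only [e]
  rw [key, key, Matrix.rank_transpose]

theorem card_pairs [Fintype F] :
    Nat.card {z : (Fin 25 → F) × (Fin 25 → F) // Matrix.vecMul z.1 (ML T z.2) = 0} =
    (Sol F [] prs eqs).ncard := by
  classical
  rw [ncard_Sol]
  have e1 : {z : (Fin 25 → F) × (Fin 25 → F) // Matrix.vecMul z.1 (ML T z.2) = 0} ≃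
      Σ y : Fin 25 → F, {x : Fin 25 → F // Matrix.vecMul x (ML T y) = 0} :=
    ⟨fun z => ⟨z.1.2, z.1.1, z.2⟩, fun z => ⟨(z.2.1, z.1), z.2.2⟩, fun _ => rfl, fun _ => rfl⟩
  have e2 : {z : (Fin 25 → F) × (Fin 25 → F) // Matrix.mulVec (ML T z.1) z.2 = 0} ≃
      Σ y : Fin 25 → F, {x : Fin 25 → F // Matrix.mulVec (ML T y) x = 0} :=
    ⟨fun z => ⟨z.1.1, z.1.2, z.2⟩, fun z => ⟨(z.1, z.2.1), z.2.2⟩, fun _ => rfl, fun _ => rfl⟩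
  rw [Nat.card_congr e1, Nat.card_congr e2, Nat.card_sigma, Nat.card_sigma]
  exact Finset.sum_congr rfl fun y _ => card_ker_transpose _

end Ident

section Lie
variable {F : Type*} [Field F]

def am (x : Fin 25 → F) : Matrix (Fin 5) (Fin 5) F :=
  !![0, x 0, x 5, x 9, x 13;
    0, 0, x 1, x 6, x 10;
    0, 0, 0, x 2, x 7;
    0, 0, 0, 0, x 3;
    0, 0, 0, 0, 0]

def sm (x : Fin 25 → F) : Matrix (Fin 5) (Fin 5) F :=
  !![x 24, x 23, x 21, x 19, x 16;
    x 23, x 22, x 20, x 17, x 14;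
    x 21, x 20, x 18, x 15, x 11;
    x 19, x 17, x 15, x 12, x 8;
    x 16, x 14, x 11, x 8, x 4]

def brA (x y : Fin 25 → F) : Matrix (Fin 5) (Fin 5) F := am x * am y - am y * am x

def brS (x y : Fin 25 → F) : Matrix (Fin 5) (Fin 5) F :=
  (am x * sm y - sm x * (am y).transpose) - (am y * sm x - sm y * (am x).transpose)

def br (x y : Fin 25 → F) : Fin 25 → F :=
  ![brA x y 0 1, brA x y 1 2, brA x y 2 3, brA x y 3 4, brS x y 4 4, brA x y 0 2,
    brA x y 1 3, brA x y 2 4, brS x y 3 4, brA x y 0 3, brA x y 1 4, brS x y 2 4,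
    brS x y 3 3, brA x y 0 4, brS x y 1 4, brS x y 2 3, brS x y 0 4, brS x y 1 3,
    brS x y 2 2, brS x y 0 3, brS x y 1 2, brS x y 0 2, brS x y 1 1, brS x y 0 1, brS x y 0 0]

theorem am_e (x : Fin 25 → F) : am x 0 0 = 0 ∧ am x 0 1 = x 0 ∧ am x 0 2 = x 5 ∧ am x 0 3 = x 9 ∧ am x 0 4 = x 13 ∧
    am x 1 0 = 0 ∧ am x 1 1 = 0 ∧ am x 1 2 = x 1 ∧ am x 1 3 = x 6 ∧ am x 1 4 = x 10 ∧
    am x 2 0 = 0 ∧ am x 2 1 = 0 ∧ am x 2 2 = 0 ∧ am x 2 3 = x 2 ∧ am x 2 4 = x 7 ∧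
    am x 3 0 = 0 ∧ am x 3 1 = 0 ∧ am x 3 2 = 0 ∧ am x 3 3 = 0 ∧ am x 3 4 = x 3 ∧
    am x 4 0 = 0 ∧ am x 4 1 = 0 ∧ am x 4 2 = 0 ∧ am x 4 3 = 0 ∧ am x 4 4 = 0 := by
  and_intros <;> rfl

theorem sm_e (x : Fin 25 → F) : sm x 0 0 = x 24 ∧ sm x 0 1 = x 23 ∧ sm x 0 2 = x 21 ∧ sm x 0 3 = x 19 ∧ sm x 0 4 = x 16 ∧
    sm x 1 0 = x 23 ∧ sm x 1 1 = x 22 ∧ sm x 1 2 = x 20 ∧ sm x 1 3 = x 17 ∧ sm x 1 4 = x 14 ∧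
    sm x 2 0 = x 21 ∧ sm x 2 1 = x 20 ∧ sm x 2 2 = x 18 ∧ sm x 2 3 = x 15 ∧ sm x 2 4 = x 11 ∧
    sm x 3 0 = x 19 ∧ sm x 3 1 = x 17 ∧ sm x 3 2 = x 15 ∧ sm x 3 3 = x 12 ∧ sm x 3 4 = x 8 ∧
    sm x 4 0 = x 16 ∧ sm x 4 1 = x 14 ∧ sm x 4 2 = x 11 ∧ sm x 4 3 = x 8 ∧ sm x 4 4 = x 4 := by
  and_intros <;> rfl

def Tks : List (List (ℕ × ℕ × ℕ × ℤ)) :=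
  [[], [], [], [], [], [(0,1,5,1), (1,0,5,-1)], [(1,2,6,1), (2,1,6,-1)],
    [(2,3,7,1), (3,2,7,-1)], [(3,4,8,1), (4,3,8,-1)],
    [(0,6,9,1), (2,5,9,-1), (5,2,9,1), (6,0,9,-1)],
    [(1,7,10,1), (3,6,10,-1), (6,3,10,1), (7,1,10,-1)],
    [(2,8,11,1), (4,7,11,-1), (7,4,11,1), (8,2,11,-1)], [(3,8,12,2), (8,3,12,-2)],
    [(0,10,13,1), (3,9,13,-1), (5,7,13,1), (7,5,13,-1), (9,3,13,1), (10,0,13,-1)],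
    [(1,11,14,1), (4,10,14,-1), (6,8,14,1), (8,6,14,-1), (10,4,14,1), (11,1,14,-1)],
    [(2,12,15,1), (3,11,15,1), (7,8,15,1), (8,7,15,-1), (11,3,15,-1), (12,2,15,-1)],
    [(0,14,16,1), (4,13,16,-1), (5,11,16,1), (8,9,16,-1), (9,8,16,1), (11,5,16,-1), (13,4,16,1), (14,0,16,-1)],
    [(1,15,17,1), (3,14,17,1), (6,12,17,1), (8,10,17,-1), (10,8,17,1), (12,6,17,-1), (14,3,17,-1), (15,1,17,-1)],
    [(2,15,18,2), (7,11,18,2), (11,7,18,-2), (15,2,18,-2)],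
    [(0,17,19,1), (3,16,19,1), (5,15,19,1), (8,13,19,-1), (9,12,19,1), (12,9,19,-1), (13,8,19,1), (15,5,19,-1), (16,3,19,-1), (17,0,19,-1)],
    [(1,18,20,1), (2,17,20,1), (6,15,20,1), (7,14,20,1), (10,11,20,1), (11,10,20,-1), (14,7,20,-1), (15,6,20,-1), (17,2,20,-1), (18,1,20,-1)],
    [(0,20,21,1), (2,19,21,1), (5,18,21,1), (7,16,21,1), (9,15,21,1), (11,13,21,-1), (13,11,21,1), (15,9,21,-1), (16,7,21,-1), (18,5,21,-1), (19,2,21,-1), (20,0,21,-1)],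
    [(1,20,22,2), (6,17,22,2), (10,14,22,2), (14,10,22,-2), (17,6,22,-2), (20,1,22,-2)],
    [(0,22,23,1), (1,21,23,1), (5,20,23,1), (6,19,23,1), (9,17,23,1), (10,16,23,1), (13,14,23,1), (14,13,23,-1), (16,10,23,-1), (17,9,23,-1), (19,6,23,-1), (20,5,23,-1), (21,1,23,-1), (22,0,23,-1)],
    [(0,23,24,2), (5,21,24,2), (9,19,24,2), (13,16,24,2), (16,13,24,-2), (19,9,24,-2), (21,5,24,-2), (23,0,24,-2)]]

theorem Tks_eq : ((List.range 25).map fun k => T.filter fun t => Nat.beq t.2.2.1 k) = Tks := by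
  rfl

theorem ix_e :
    ix 0 = 0 ∧ ix 1 = 1 ∧ ix 2 = 2 ∧ ix 3 = 3 ∧ ix 4 = 4 ∧ ix 5 = 5 ∧ ix 6 = 6 ∧ ix 7 = 7 ∧
    ix 8 = 8 ∧ ix 9 = 9 ∧ ix 10 = 10 ∧ ix 11 = 11 ∧ ix 12 = 12 ∧ ix 13 = 13 ∧ ix 14 = 14 ∧ ix 15 = 15 ∧
    ix 16 = 16 ∧ ix 17 = 17 ∧ ix 18 = 18 ∧ ix 19 = 19 ∧ ix 20 = 20 ∧ ix 21 = 21 ∧ ix 22 = 22 ∧ ix 23 = 23 ∧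
    ix 24 = 24 := by
  and_intros <;> rfl

theorem ML_vecMul' (x y : Fin 25 → F) (k : Fin 25) : Matrix.vecMul x (ML T y) k =
    ((Tks.getD k []).map fun t => (t.2.2.2 : F) * (x (ix t.1) * y (ix t.2.1))).sum := by
  have hf : ∀ (L : List (ℕ × ℕ × ℕ × ℤ)) (g : ℕ × ℕ × ℕ × ℤ → F), (∀ t ∈ L, t.2.2.1 < 25) →
      (L.map fun t => if ix t.2.2.1 = k then g t else 0).sum =
      ((L.filter fun t => Nat.beq t.2.2.1 k).map g).sum := by
    intro L g hL
    induction L with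
    | nil => rfl
    | cons t L ih =>
      rw [List.map_cons, List.sum_cons, ih (fun t ht => hL t (by simp [ht])), List.filter_cons]
      have h3 := hL t (by simp)
      by_cases h : t.2.2.1 = (k : ℕ)
      · have hb : Nat.beq t.2.2.1 k = true := by rw [h]; exact Nat.beq_refl _
        have hi : ix t.2.2.1 = k := by apply Fin.ext; rw [ix_val h3, h]
        rw [if_pos hb, if_pos hi, List.map_cons, List.sum_cons]
      · have hb : ¬ Nat.beq t.2.2.1 k = true := fun hh => h (Nat.eq_of_beq_eq_true hh)
        have hi : ¬ ix t.2.2.1 = k := fun hh => h (by rw [← hh, ix_val h3])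
        rw [if_neg hb, if_neg hi, zero_add]
  rw [ML_vecMul, hf _ _ (fun t ht => (T_bd t ht).2.2), ← Tks_eq]
  congr 2
  rw [List.getD_eq_getElem _ _ (by simp)]
  simp

theorem br_eq (x y : Fin 25 → F) : Matrix.vecMul x (ML T y) = br x y := by
  funext k
  rw [ML_vecMul']
  fin_cases k <;>
  (simp only [Tks, br, brA, brS, Matrix.sub_apply, Matrix.mul_apply, Fin.sum_univ_five,
    Matrix.transpose_apply, am_e, sm_e, Fin.reduceFinMk, Fin.zero_eta, Fin.mk_one, Matrix.cons_val,
    List.getD_cons_succ, List.getD_cons_zero, List.map_cons, List.map_nil, List.sum_cons,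
    List.sum_nil, ix_e]
   push_cast
   ring)

theorem am_low (x : Fin 25 → F) (i j : Fin 5) (h : j ≤ i) : am x i j = 0 := by
  revert h
  fin_cases i <;> fin_cases j <;> simp [am]

theorem sm_symm (x : Fin 25 → F) : (sm x).transpose = sm x := by
  ext i j; fin_cases i <;> fin_cases j <;> rfl

theorem am_mul_low (x y : Fin 25 → F) (i j : Fin 5) (h : j ≤ i) : (am x * am y) i j = 0 := by
  rw [Matrix.mul_apply]
  apply Finset.sum_eq_zero
  intro k _
  by_cases hk : k ≤ i
  · rw [am_low x i k hk, zero_mul]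
  · rw [am_low y k j (h.trans (le_of_not_ge hk)), mul_zero]

theorem am_br (x y : Fin 25 → F) : brA x y = am (br x y) := by
  ext i j
  by_cases hij : j ≤ i
  · rw [am_low _ i j hij, brA, Matrix.sub_apply, am_mul_low x y i j hij, am_mul_low y x i j hij,
      sub_zero]
  · revert hij
    fin_cases i <;> fin_cases j <;> intro hij <;> first | rfl | exact absurd (by decide) hij

theorem sm_br (x y : Fin 25 → F) : brS x y = sm (br x y) := by
  have hs : (brS x y).transpose = brS x y := by
    unfold brS
    simp only [Matrix.transpose_sub, Matrix.transpose_mul, Matrix.transpose_transpose, sm_symm]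
    abel
  have hs' : ∀ i j, brS x y i j = brS x y j i := fun i j => congrFun (congrFun hs j) i
  ext i j
  fin_cases i <;> fin_cases j <;> first | rfl | exact hs' _ _

def Xm (x : Fin 25 → F) : Matrix (Fin 5 ⊕ Fin 5) (Fin 5 ⊕ Fin 5) F :=
  Matrix.fromBlocks (am x) (sm x) 0 (-(am x).transpose)

theorem am_zero : am (0 : Fin 25 → F) = 0 := by
  ext i j; fin_cases i <;> fin_cases j <;> rfl
theorem sm_zero : sm (0 : Fin 25 → F) = 0 := by
  ext i j; fin_cases i <;> fin_cases j <;> rfl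

theorem Xm_inj {x y : Fin 25 → F} (ha : am x = am y) (hs : sm x = sm y) : x = y := by
  funext k
  have A := fun i j => congrFun (congrFun ha i) j
  have S := fun i j => congrFun (congrFun hs i) j
  fin_cases k
  exacts [A 0 1, A 1 2, A 2 3, A 3 4, S 4 4, A 0 2, A 1 3, A 2 4, S 3 4, A 0 3, A 1 4, S 2 4, S 3 3,
    A 0 4, S 1 4, S 2 3, S 0 4, S 1 3, S 2 2, S 0 3, S 1 2, S 0 2, S 1 1, S 0 1, S 0 0]

theorem Xm_comm (x y : Fin 25 → F) : Xm x * Xm y = Xm y * Xm x ↔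
    Matrix.vecMul x (ML T y) = 0 := by
  rw [br_eq]
  unfold Xm
  rw [Matrix.fromBlocks_multiply, Matrix.fromBlocks_multiply, Matrix.fromBlocks_inj]
  simp only [Matrix.mul_zero, add_zero, Matrix.zero_mul, Matrix.mul_neg, Matrix.neg_mul,
    zero_add, neg_neg, true_and]
  constructor
  · rintro ⟨h1, h2, h3⟩
    apply Xm_inj
    · rw [← am_br, am_zero, brA, sub_eq_zero, h1]
    · rw [← sm_br, sm_zero, brS, sub_eq_zero, sub_eq_add_neg, h2, sub_eq_add_neg]
  · intro h
    have h1 := am_br x y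
    have h2 := sm_br x y
    rw [h, am_zero, brA, sub_eq_zero] at h1
    rw [h, sm_zero, brS, sub_eq_zero] at h2
    refine ⟨h1, ?_, ?_⟩
    · rw [← sub_eq_add_neg, h2, sub_eq_add_neg]
    · rw [← Matrix.transpose_mul, ← Matrix.transpose_mul, h1]

/-- position of a basis vector in the flag -/
def rk : Fin 5 ⊕ Fin 5 → ℕ
  | .inl i => i
  | .inr i => 9 - i

abbrev Mt (F : Type*) := Matrix (Fin 5 ⊕ Fin 5) (Fin 5 ⊕ Fin 5) F

def Up (A : Mt F) : Prop := ∀ i j, rk j < rk i → A i j = 0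
def SUp (A : Mt F) : Prop := ∀ i j, rk j ≤ rk i → A i j = 0

def Jm : Mt F := Matrix.J (Fin 5) F

def InU (X : Mt F) : Prop := SUp X ∧ X * Jm + Jm * X.transpose = 0

theorem cond_blocks (a s c d : Matrix (Fin 5) (Fin 5) F) :
    Matrix.fromBlocks a s c d * Jm + Jm * (Matrix.fromBlocks a s c d).transpose = 0 ↔
      s.transpose = s ∧ d = - a.transpose ∧ c.transpose = c := by
  unfold Jm Matrix.J
  rw [Matrix.fromBlocks_transpose, Matrix.fromBlocks_multiply, Matrix.fromBlocks_multiply,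
    Matrix.fromBlocks_add, ← Matrix.fromBlocks_zero, Matrix.fromBlocks_inj]
  simp only [Matrix.mul_zero, add_zero, Matrix.zero_mul, Matrix.mul_neg, Matrix.neg_mul,
    zero_add, Matrix.mul_one, Matrix.one_mul]
  constructor
  · rintro ⟨h1, h2, h3, h4⟩
    refine ⟨(sub_eq_zero.1 (by rw [sub_eq_add_neg, h1])).symm, ?_, ?_⟩
    · exact eq_neg_of_add_eq_zero_left h3
    · rw [neg_add_eq_zero] at h4; exact h4.symm
  · rintro ⟨h1, h2, h3⟩
    refine ⟨by rw [h1]; simp, by rw [h2]; simp, by rw [h2]; simp, by rw [h3]; simp⟩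

theorem Xm_mem (x : Fin 25 → F) : InU (Xm x) := by
  refine ⟨?_, (cond_blocks _ _ _ _).2 ⟨sm_symm x, rfl, by simp⟩⟩
  rintro (i | i) (j | j) h
  · exact am_low x i j h
  · simp only [rk] at h; omega
  · rfl
  · simp only [rk] at h
    simp only [Xm, Matrix.fromBlocks_apply₂₂, Matrix.neg_apply, Matrix.transpose_apply]
    rw [am_low x j i (by rw [Fin.le_def]; omega), neg_zero]

theorem Xm_surj (X : Mt F) (h : InU X) : ∃ x, Xm x = X := by
  obtain ⟨h1, h2⟩ := h
  rw [← Matrix.fromBlocks_toBlocks X, cond_blocks] at h2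
  obtain ⟨hs, hd, hc⟩ := h2
  have S : ∀ i j, X.toBlocks₁₂ i j = X.toBlocks₁₂ j i := fun i j => (congrFun (congrFun hs j) i)
  have A : ∀ i j : Fin 5, j ≤ i → X.toBlocks₁₁ i j = 0 := fun i j hij => h1 (.inl i) (.inl j) hij
  have ha : ∀ a s : Matrix (Fin 5) (Fin 5) F, (∀ i j : Fin 5, j ≤ i → a i j = 0) →
      (∀ i j, s i j = s j i) → ∃ x, am x = a ∧ sm x = s := by
    intro a s ha hs
    refine ⟨![a 0 1, a 1 2, a 2 3, a 3 4, s 4 4, a 0 2, a 1 3, a 2 4, s 3 4, a 0 3, a 1 4, s 2 4,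
      s 3 3, a 0 4, s 1 4, s 2 3, s 0 4, s 1 3, s 2 2, s 0 3, s 1 2, s 0 2, s 1 1, s 0 1, s 0 0],
      ?_, ?_⟩
    · ext i j
      by_cases hij : j ≤ i
      · rw [ha i j hij, am_low _ i j hij]
      · revert hij
        fin_cases i <;> fin_cases j <;> simp [am]
    · ext i j
      fin_cases i <;> fin_cases j <;> first | rfl | exact hs _ _
  obtain ⟨x, e1, e2⟩ := ha _ _ A S
  refine ⟨x, ?_⟩
  rw [← Matrix.fromBlocks_toBlocks X, Xm, e1, e2, ← hd]
  congr 1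
  ext i j
  exact (h1 (.inr i) (.inl j) (by simp only [rk]; omega)).symm

noncomputable def XE : (Fin 25 → F) ≃ {X : Mt F // InU X} :=
  Equiv.ofBijective (fun x => ⟨Xm x, Xm_mem x⟩) (by
    constructor
    · intro x y h
      have := congrArg Subtype.val h
      simp only [Xm, Matrix.fromBlocks_inj] at this
      exact Xm_inj this.1 this.2.1
    · rintro ⟨X, h⟩
      obtain ⟨x, rfl⟩ := Xm_surj X h
      exact ⟨x, rfl⟩)

theorem card_InU [Fintype F] : Nat.card {X : Mt F // InU X} = Nat.card F ^ 25 := by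
  rw [← Nat.card_congr XE]; simp

theorem card_comm_InU [Fintype F] :
    Nat.card {z : {X : Mt F // InU X} × {X : Mt F // InU X} // z.1.1 * z.2.1 = z.2.1 * z.1.1} =
    (Sol F [] prs eqs).ncard := by
  rw [← card_pairs]
  refine Nat.card_congr (Equiv.subtypeEquiv (Equiv.prodCongr XE XE) ?_).symm
  rintro ⟨x, y⟩
  exact (Xm_comm x y).symm

end Lie

section Cayley
variable {F : Type*} [Field F]

theorem rk_inj : Function.Injective rk := by
  rintro (i | i) (j | j) h <;> simp only [rk] at h
  · rw [Fin.ext h]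
  · omega
  · omega
  · rw [show i = j from Fin.ext (by omega)]

theorem SUp.up {A : Mt F} (h : SUp A) : Up A := fun i j hij => h i j hij.le

theorem up_one : Up (1 : Mt F) := fun i j h => Matrix.one_apply_ne (by rintro rfl; omega)

theorem Up.add {A B : Mt F} (ha : Up A) (hb : Up B) : Up (A + B) := fun i j h => by
  rw [Matrix.add_apply, ha i j h, hb i j h, add_zero]

theorem SUp.add {A B : Mt F} (ha : SUp A) (hb : SUp B) : SUp (A + B) := fun i j h => by
  rw [Matrix.add_apply, ha i j h, hb i j h, add_zero]

theorem SUp.neg {A : Mt F} (ha : SUp A) : SUp (-A) := fun i j h => by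
  rw [Matrix.neg_apply, ha i j h, neg_zero]

theorem SUp.smul {A : Mt F} (c : F) (ha : SUp A) : SUp (c • A) := fun i j h => by
  rw [Matrix.smul_apply, ha i j h, smul_zero]

theorem SUp.mul_up {A B : Mt F} (ha : SUp A) (hb : Up B) : SUp (A * B) := by
  intro i j h
  rw [Matrix.mul_apply]
  apply Finset.sum_eq_zero
  intro k _
  by_cases hk : rk k ≤ rk i
  · rw [ha i k hk, zero_mul]
  · rw [hb k j (by omega), mul_zero]

theorem Up.mul {A B : Mt F} (ha : Up A) (hb : Up B) : Up (A * B) := by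
  intro i j h
  rw [Matrix.mul_apply]
  apply Finset.sum_eq_zero
  intro k _
  by_cases hk : rk k < rk i
  · rw [ha i k hk, zero_mul]
  · rw [hb k j (by omega), mul_zero]

theorem Up.mul_diag {A B : Mt F} (ha : Up A) (hb : Up B) (i : Fin 5 ⊕ Fin 5) :
    (A * B) i i = A i i * B i i := by
  rw [Matrix.mul_apply]
  apply Finset.sum_eq_single i
  · intro k _ hk
    rcases lt_trichotomy (rk k) (rk i) with h | h | h
    · rw [ha i k h, zero_mul]
    · exact absurd (rk_inj h) hk
    · rw [hb k i h, mul_zero]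
  · intro h; exact absurd (Finset.mem_univ i) h

theorem det_ne_gen {m : Type*} [Fintype m] [DecidableEq m] (r : m → ℕ) (hr : Function.Injective r)
    (A : Matrix m m F) (ha : ∀ i j, r j < r i → A i j = 0) (hd : ∀ i, A i i ≠ 0) :
    IsUnit A.det := by
  let : LinearOrder m := LinearOrder.lift' r hr
  have h : A.IsUpperTriangular := by
    intro i j h
    have h' : r j < r i := h
    exact ha i j h'
  rw [Matrix.det_of_isUpperTriangular h, isUnit_iff_ne_zero]
  exact Finset.prod_ne_zero_iff.2 fun i _ => hd i

theorem Up.det_unit {A : Mt F} (ha : Up A) (hd : ∀ i, A i i ≠ 0) : IsUnit A.det :=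
  det_ne_gen rk rk_inj A ha hd

theorem Up.inv {A : Mt F} (ha : Up A) (hd : IsUnit A.det) : Up A⁻¹ := by
  let := Matrix.invertibleOfIsUnitDet A hd
  have h : A.BlockTriangular rk := fun i j h => ha i j h
  exact fun i j hij => Matrix.blockTriangular_inv_of_blockTriangular h hij

theorem inv_two_smul (h2 : (2 : F) ≠ 0) {A : Mt F} (hA : IsUnit A.det) :
    ((2 : F) • A⁻¹)⁻¹ = (2 : F)⁻¹ • A := by
  apply Matrix.inv_eq_right_inv
  rw [Matrix.smul_mul, Matrix.mul_smul, smul_smul, mul_inv_cancel₀ h2, one_smul,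
    Matrix.nonsing_inv_mul _ hA]

theorem cay_cond (h2 : (2 : F) ≠ 0) {A h : Mt F} (J : Mt F) (e1 : A * h = 1) (e2 : h * A = 1) :
    ((1 - (2 : F) • h) * J + J * (1 - (2 : F) • h).transpose = 0) ↔
      (A - 1) * J * (A - 1).transpose = J := by
  have e1' : h.transpose * A.transpose = 1 := by rw [← Matrix.transpose_mul, e1]; simp
  have e2' : A.transpose * h.transpose = 1 := by rw [← Matrix.transpose_mul, e2]; simp
  have i1 : (1 - (2 : F) • h) * J + J * (1 - (2 : F) • h).transpose =
      (2 : F) • (J - h * J - J * h.transpose) := by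
    rw [Matrix.transpose_sub, Matrix.transpose_smul, Matrix.transpose_one, Matrix.sub_mul,
      Matrix.mul_sub, Matrix.one_mul, Matrix.mul_one, Matrix.smul_mul, Matrix.mul_smul,
      smul_sub, smul_sub, two_smul F J]
    abel
  have i2 : (A - 1) * J * (A - 1).transpose - J =
      A * J * A.transpose - A * J - J * A.transpose := by
    rw [Matrix.transpose_sub, Matrix.transpose_one]
    noncomm_ring
  rw [i1, smul_eq_zero, or_iff_right h2, ← sub_eq_zero (b := J), i2]
  constructor
  · intro hh
    have : A * (J - h * J - J * h.transpose) * A.transpose = 0 := by rw [hh]; simp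
    rw [← this]
    have k1 : A * (h * J) * A.transpose = J * A.transpose := by
      rw [← Matrix.mul_assoc, e1, Matrix.one_mul]
    have k2 : A * (J * h.transpose) * A.transpose = A * J := by
      rw [← Matrix.mul_assoc, Matrix.mul_assoc, e1', Matrix.mul_one]
    rw [Matrix.mul_sub, Matrix.mul_sub, Matrix.sub_mul, Matrix.sub_mul, k1, k2]
    abel
  · intro hh
    have : h * (A * J * A.transpose - A * J - J * A.transpose) * h.transpose = 0 := by
      rw [hh]; simp
    rw [← this]
    have k1 : h * (A * J * A.transpose) * h.transpose = J := by
      rw [Matrix.mul_assoc A, ← Matrix.mul_assoc h, e2, Matrix.one_mul, Matrix.mul_assoc, e2',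
        Matrix.mul_one]
    have k2 : h * (A * J) * h.transpose = J * h.transpose := by
      rw [← Matrix.mul_assoc, e2, Matrix.one_mul]
    have k3 : h * (J * A.transpose) * h.transpose = h * J := by
      rw [← Matrix.mul_assoc, Matrix.mul_assoc, e2', Matrix.mul_one]
    rw [Matrix.mul_sub, Matrix.mul_sub, Matrix.sub_mul, Matrix.sub_mul, k1, k2, k3]
    abel

def InG (g : Mt F) : Prop := SUp (g - 1) ∧ g * Jm * g.transpose = Jm

theorem InG.unit (h2 : (2 : F) ≠ 0) {g : Mt F} (h : SUp (g - 1)) :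
    Up (g + 1) ∧ IsUnit (g + 1).det := by
  have hu : Up (g + 1) := by
    have : g + 1 = (g - 1) + (1 + 1) := by abel
    rw [this]; exact h.up.add (up_one.add up_one)
  refine ⟨hu, hu.det_unit fun i => ?_⟩
  have := h i i le_rfl
  rw [Matrix.sub_apply, Matrix.one_apply_eq] at this
  rw [Matrix.add_apply, Matrix.one_apply_eq, sub_eq_zero.1 this, one_add_one_eq_two]
  exact h2

theorem InU.unit {X : Mt F} (h : SUp X) : Up (1 - X) ∧ IsUnit (1 - X).det := by
  have hu : Up (1 - X) := by rw [sub_eq_add_neg]; exact up_one.add h.neg.up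
  refine ⟨hu, hu.det_unit fun i => ?_⟩
  rw [Matrix.sub_apply, Matrix.one_apply_eq, h i i le_rfl, sub_zero]
  exact one_ne_zero

theorem cay_to (h2 : (2 : F) ≠ 0) {g : Mt F} (h : InG g) : InU (1 - (2 : F) • (g + 1)⁻¹) := by
  obtain ⟨hu, hd⟩ := InG.unit h2 h.1
  constructor
  · have : 1 - (2 : F) • (g + 1)⁻¹ = (g - 1) * (g + 1)⁻¹ := by
      have e : g - 1 = (g + 1) - (2 : F) • 1 := by rw [two_smul]; abel
      rw [e, Matrix.sub_mul, Matrix.mul_nonsing_inv _ hd, Matrix.smul_mul, Matrix.one_mul]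
    rw [this]; exact h.1.mul_up (hu.inv hd)
  · rw [cay_cond h2 Jm (Matrix.mul_nonsing_inv _ hd) (Matrix.nonsing_inv_mul _ hd),
      add_sub_cancel_right]
    exact h.2

theorem cay_from (h2 : (2 : F) ≠ 0) {X : Mt F} (h : InU X) : InG ((2 : F) • (1 - X)⁻¹ - 1) := by
  obtain ⟨hu, hd⟩ := InU.unit h.1
  constructor
  · have : (2 : F) • (1 - X)⁻¹ - 1 - 1 = (2 : F) • (X * (1 - X)⁻¹) := by
      have e : X * (1 - X)⁻¹ = (1 - X)⁻¹ - 1 := by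
        have := Matrix.mul_nonsing_inv _ hd
        rw [Matrix.sub_mul, Matrix.one_mul] at this
        exact eq_sub_of_add_eq (by rw [add_comm]; exact (sub_eq_iff_eq_add.1 this).symm)
      rw [e, smul_sub, two_smul F (1 : Mt F)]; abel
    rw [this]; exact (h.1.mul_up (hu.inv hd)).smul 2
  · have e1 : ((2 : F) • (1 - X)⁻¹) * ((2 : F)⁻¹ • (1 - X)) = 1 := by
      rw [Matrix.smul_mul, Matrix.mul_smul, smul_smul, mul_inv_cancel₀ h2, one_smul,
        Matrix.nonsing_inv_mul _ hd]
    have e2 : ((2 : F)⁻¹ • (1 - X)) * ((2 : F) • (1 - X)⁻¹) = 1 := by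
      rw [Matrix.smul_mul, Matrix.mul_smul, smul_smul, inv_mul_cancel₀ h2, one_smul,
        Matrix.mul_nonsing_inv _ hd]
    rw [← cay_cond h2 Jm e1 e2, smul_smul, mul_inv_cancel₀ h2, one_smul, sub_sub_cancel]
    exact h.2

noncomputable def cay (h2 : (2 : F) ≠ 0) : {g : Mt F // InG g} ≃ {X : Mt F // InU X} where
  toFun g := ⟨1 - (2 : F) • (g.1 + 1)⁻¹, cay_to h2 g.2⟩
  invFun X := ⟨(2 : F) • (1 - X.1)⁻¹ - 1, cay_from h2 X.2⟩
  left_inv g := by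
    apply Subtype.ext
    simp only [sub_sub_cancel]
    rw [inv_two_smul h2 (InG.unit h2 g.2.1).2, smul_smul, mul_inv_cancel₀ h2, one_smul,
      add_sub_cancel_right]
  right_inv X := by
    apply Subtype.ext
    simp only [sub_add_cancel]
    rw [inv_two_smul h2 (InU.unit X.2.1).2, smul_smul, mul_inv_cancel₀ h2, one_smul,
      sub_sub_cancel]

theorem cay_comm (h2 : (2 : F) ≠ 0) (g k : {g : Mt F // InG g}) :
    g.1 * k.1 = k.1 * g.1 ↔
      (cay h2 g).1 * (cay h2 k).1 = (cay h2 k).1 * (cay h2 g).1 := by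
  have s1 : ∀ a b : Mt F, a * b = b * a ↔ (a + 1) * (b + 1) = (b + 1) * (a + 1) := by
    intro a b
    rw [← sub_eq_zero, ← sub_eq_zero (a := (a + 1) * (b + 1))]
    have : (a + 1) * (b + 1) - (b + 1) * (a + 1) = a * b - b * a := by noncomm_ring
    rw [this]
  have s2 : ∀ a b : Mt F, a * b = b * a ↔
      (1 - (2 : F) • a) * (1 - (2 : F) • b) = (1 - (2 : F) • b) * (1 - (2 : F) • a) := by
    intro a b
    rw [← sub_eq_zero, ← sub_eq_zero (a := (1 - (2 : F) • a) * (1 - (2 : F) • b))]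
    have : (1 - (2 : F) • a) * (1 - (2 : F) • b) - (1 - (2 : F) • b) * (1 - (2 : F) • a) =
        (2 * 2 : F) • (a * b - b * a) := by
      simp only [Matrix.sub_mul, Matrix.mul_sub, Matrix.one_mul, Matrix.mul_one, Matrix.smul_mul,
        Matrix.mul_smul, smul_smul, smul_sub]
      abel
    rw [this, smul_eq_zero, or_iff_right (mul_ne_zero h2 h2)]
  have s3 : ∀ a b : Mt F, a * b = b * a → a⁻¹ * b⁻¹ = b⁻¹ * a⁻¹ := by
    intro a b h
    rw [← Matrix.mul_inv_rev, ← Matrix.mul_inv_rev, h]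
  have u1 := (InG.unit h2 g.2.1).2
  have u2 := (InG.unit h2 k.2.1).2
  rw [s1]
  show _ ↔ (1 - (2 : F) • (g.1 + 1)⁻¹) * (1 - (2 : F) • (k.1 + 1)⁻¹) = _
  refine Iff.trans ⟨s3 _ _, fun h => ?_⟩ (s2 _ _)
  have := s3 _ _ h
  rwa [Matrix.nonsing_inv_nonsing_inv _ u1, Matrix.nonsing_inv_nonsing_inv _ u2] at this

end Cayley

section Syl
variable {F : Type*} [Field F]

abbrev Sp (F : Type*) [Field F] := Matrix.symplecticGroup (Fin 5) F

theorem sup_up {g : Mt F} (h : SUp (g - 1)) : Up g := by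
  have : g = (g - 1) + 1 := by abel
  rw [this]; exact h.up.add up_one

def Ug : Subgroup (Sp F) where
  carrier := {g | SUp (g.1 - 1)}
  one_mem' := by
    intro i j _
    simp
  mul_mem' := by
    intro a b ha hb
    have : (a * b).1 - 1 = (a.1 - 1) * b.1 + (b.1 - 1) := by
      rw [Submonoid.coe_mul]; noncomm_ring
    show SUp ((a * b).1 - 1)
    rw [this]
    exact (SUp.mul_up ha (sup_up hb)).add hb
  inv_mem' := by
    intro a ha
    have hd : IsUnit a.1.det := SymplecticGroup.symplectic_det a.2
    show SUp ((a⁻¹).1 - 1)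
    rw [SymplecticGroup.coe_inv']
    have : (a.1)⁻¹ - 1 = -((a.1 - 1) * (a.1)⁻¹) := by
      rw [Matrix.sub_mul, Matrix.mul_nonsing_inv _ hd, Matrix.one_mul]; abel
    rw [this]
    exact (SUp.mul_up ha ((sup_up ha).inv hd)).neg

theorem mem_Ug {g : Sp F} : g ∈ Ug ↔ SUp (g.1 - 1) := Iff.rfl

def UgE : (Ug (F := F)) ≃ {g : Mt F // InG g} where
  toFun g := ⟨g.1.1, g.2, SymplecticGroup.mem_iff.1 g.1.2⟩
  invFun g := ⟨⟨g.1, SymplecticGroup.mem_iff.2 g.2.2⟩, g.2.1⟩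
  left_inv _ := rfl
  right_inv _ := rfl

theorem card_Ug [Fintype F] (h2 : (2 : F) ≠ 0) : Nat.card (Ug (F := F)) = Nat.card F ^ 25 := by
  rw [Nat.card_congr (UgE.trans (cay h2)), card_InU]

theorem card_comm_Ug [Fintype F] (h2 : (2 : F) ≠ 0) :
    Nat.card {z : (Ug (F := F)) × (Ug (F := F)) // Commute z.1 z.2} =
      (Sol F [] prs eqs).ncard := by
  rw [← card_comm_InU]
  refine Nat.card_congr (Equiv.subtypeEquiv
    (Equiv.prodCongr (UgE.trans (cay h2)) (UgE.trans (cay h2))) ?_)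
  rintro ⟨a, b⟩
  refine Iff.trans ?_ (cay_comm h2 (UgE a) (UgE b))
  rw [commute_iff_eq, Subtype.ext_iff, Subtype.ext_iff]
  rfl

def Wk (k : ℕ) (v : Fin 5 ⊕ Fin 5 → F) : Prop := ∀ i, k ≤ rk i → v i = 0

theorem root_mem {N : Mt F} (h : InU N) (hN : N * N = 0) :
    ∃ u : Sp F, u ∈ Ug ∧ u.1 - 1 = N := by
  have hs : (1 + N) ∈ Matrix.symplecticGroup (Fin 5) F := by
    rw [SymplecticGroup.mem_iff]
    have h1 := h.2
    have h3 : N * Jm * N.transpose = 0 := by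
      have : Jm * N.transpose = -(N * Jm) := (neg_eq_of_add_eq_zero_right h1).symm
      rw [Matrix.mul_assoc, this, Matrix.mul_neg, ← Matrix.mul_assoc, hN, Matrix.zero_mul, neg_zero]
    have : (1 + N) * Jm * (1 + N).transpose = Jm + (N * Jm + Jm * N.transpose) +
        N * Jm * N.transpose := by
      rw [Matrix.transpose_add, Matrix.transpose_one]; noncomm_ring
    rw [h1, h3, add_zero, add_zero] at this
    exact this
  have e : (1 + N) - 1 = N := by abel
  refine ⟨⟨1 + N, hs⟩, ?_, e⟩
  rw [mem_Ug]
  show SUp ((1 + N) - 1)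
  rw [e]; exact h.1

theorem root_a (i j : Fin 5) (hij : i < j) : ∃ u : Sp F, u ∈ Ug ∧ u.1 - 1 =
    Matrix.fromBlocks (Matrix.single i j (1 : F)) 0 0 (-(Matrix.single i j (1 : F)).transpose) := by
  apply root_mem
  · refine ⟨?_, (cond_blocks _ _ _ _).2 ⟨by simp, rfl, by simp⟩⟩
    rintro (a | a) (b | b) h
    · rw [Matrix.fromBlocks_apply₁₁]
      apply Matrix.single_apply_of_ne
      rintro ⟨rfl, rfl⟩
      simp only [rk] at h
      rw [Fin.lt_def] at hij; omega
    · rfl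
    · rfl
    · rw [Matrix.fromBlocks_apply₂₂, Matrix.neg_apply, Matrix.transpose_apply,
        Matrix.single_apply_of_ne, neg_zero]
      rintro ⟨rfl, rfl⟩
      simp only [rk] at h
      rw [Fin.lt_def] at hij; omega
  · have h0 : Matrix.single i j (1 : F) * Matrix.single i j (1 : F) = 0 :=
      Matrix.single_mul_single_of_ne _ _ _ _ hij.ne' _
    rw [Matrix.fromBlocks_multiply]
    simp only [Matrix.neg_mul, Matrix.mul_neg, ← Matrix.transpose_mul, h0]
    simp

theorem root_s : ∃ u : Sp F, u ∈ Ug ∧ u.1 - 1 =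
    Matrix.fromBlocks 0 (Matrix.single 4 4 (1 : F)) 0 0 := by
  apply root_mem
  · refine ⟨?_, (cond_blocks _ _ _ _).2 ⟨by simp, by simp, by simp⟩⟩
    rintro (a | a) (b | b) h
    · rfl
    · simp only [rk] at h; omega
    · rfl
    · rfl
  · rw [Matrix.fromBlocks_multiply]
    simp

theorem root_lemma (k : ℕ) (w : Fin 5 ⊕ Fin 5 → F)
    (h : ∀ u : Sp F, u ∈ Ug → Wk k (Matrix.mulVec (u.1 - 1) w)) : Wk (k + 1) w := by
  rintro (b | b) hb
  · simp only [rk] at hb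
    let a : Fin 5 := ⟨b - 1, by omega⟩
    have hab : a < b := by rw [Fin.lt_def]; simp only [a]; omega
    obtain ⟨u, hu, e⟩ := root_a (F := F) a b hab
    have := h u hu (.inl a) (by simp only [rk, a]; omega)
    rw [e] at this
    simpa [Matrix.mulVec, dotProduct, Matrix.single_apply] using this
  · simp only [rk] at hb
    by_cases h4 : b = 4
    · subst h4
      obtain ⟨u, hu, e⟩ := root_s (F := F)
      have := h u hu (.inl 4) (by simp only [rk]; omega)
      rw [e] at this
      simpa [Matrix.mulVec, dotProduct, Matrix.single_apply] using this
    · let c : Fin 5 := ⟨b + 1, by omega⟩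
      have hbc : b < c := by rw [Fin.lt_def]; simp only [c]; omega
      obtain ⟨u, hu, e⟩ := root_a (F := F) b c hbc
      have := h u hu (.inr c) (by simp only [rk, c]; omega)
      rw [e] at this
      simpa [Matrix.mulVec, dotProduct, Matrix.single_apply] using this

theorem norm_flag (g : Sp F) (hg : ∀ u ∈ (Ug (F := F)), g⁻¹ * u * g ∈ Ug) (k : ℕ) :
    ∀ v, Wk k v → Wk k (Matrix.mulVec g.1 v) := by
  induction k with
  | zero =>
    intro v hv
    have : v = 0 := funext fun i => hv i (Nat.zero_le _)
    rw [this, Matrix.mulVec_zero]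
    intro i _; rfl
  | succ k ih =>
    intro v hv
    apply root_lemma
    intro u hu
    have e : (u.1 - 1) * g.1 = g.1 * ((g⁻¹ * u * g).1 - 1) := by
      have : u * g = g * (g⁻¹ * u * g) := by group
      have := congrArg Subtype.val this
      rw [Submonoid.coe_mul, Submonoid.coe_mul] at this
      rw [Matrix.sub_mul, Matrix.mul_sub, this, Matrix.one_mul, Matrix.mul_one]
    rw [Matrix.mulVec_mulVec, e, ← Matrix.mulVec_mulVec]
    apply ih
    intro i hi
    have hn := hg u hu
    rw [mem_Ug] at hn
    simp only [Matrix.mulVec, dotProduct]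
    apply Finset.sum_eq_zero
    intro j _
    by_cases hj : rk j ≤ rk i
    · rw [hn i j hj, zero_mul]
    · rw [hv j (by omega), mul_zero]

theorem norm_mem (p : ℕ) [Fact p.Prime] [CharP F p] (g : Sp F)
    (hg : ∀ u ∈ (Ug (F := F)), g⁻¹ * u * g ∈ Ug) (k : ℕ) (hk : g ^ p ^ k = 1) : g ∈ Ug := by
  have hup : Up g.1 := by
    intro i j hij
    have := norm_flag g hg (rk j + 1) (Pi.single j 1) (by
      intro a ha
      rw [Pi.single_eq_of_ne]
      rintro rfl; omega) i hij
    simpa using this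
  have hdiag : ∀ n : ℕ, Up (g.1 ^ n) ∧ ∀ i, (g.1 ^ n) i i = (g.1 i i) ^ n := by
    intro n
    induction n with
    | zero => exact ⟨by rw [pow_zero]; exact up_one, fun i => by simp⟩
    | succ n ih =>
      refine ⟨by rw [pow_succ]; exact ih.1.mul hup, fun i => ?_⟩
      rw [pow_succ, ih.1.mul_diag hup, ih.2, pow_succ]
  rw [mem_Ug]
  intro i j hij
  rcases hij.lt_or_eq with h | h
  · rw [Matrix.sub_apply, hup i j h, up_one i j h, sub_zero]
  · have hij := rk_inj h
    subst hij
    have h1 : (g.1 j j) ^ p ^ k = 1 := by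
      have h0 := congrArg Subtype.val hk
      rw [SubmonoidClass.coe_pow] at h0
      rw [← (hdiag _).2 j, h0]
      simp
    have h3 : (g.1 j j - 1) ^ p ^ k = 0 := by
      rw [sub_pow_char_pow, h1, one_pow, sub_self]
    rw [Matrix.sub_apply, Matrix.one_apply_eq]
    exact eq_zero_of_pow_eq_zero h3

theorem Ug_sylow [Fintype F] (p : ℕ) [Fact p.Prime] [CharP F p] (Q : Sylow p (Sp F))
    (hQ : (Ug (F := F)) ≤ (Q : Subgroup (Sp F))) : (Q : Subgroup (Sp F)) = Ug := by
  by_contra hne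
  have hp := Q.isPGroup'
  have : Group.IsNilpotent (Q : Subgroup (Sp F)) := hp.isNilpotent
  have hlt : (Ug.subgroupOf (Q : Subgroup (Sp F))) < ⊤ := by
    rw [lt_top_iff_ne_top]
    intro h
    rw [Subgroup.subgroupOf_eq_top] at h
    exact hne (le_antisymm h hQ)
  have hn := Group.normalizerCondition_of_isNilpotent _ hlt
  obtain ⟨g, hg, hg'⟩ := SetLike.exists_of_lt hn
  apply hg'
  rw [Subgroup.mem_subgroupOf]
  obtain ⟨k, hk⟩ := hp g
  refine norm_mem p g.1 ?_ k (by simpa using congrArg Subtype.val hk)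
  intro u hu
  have hg2 := Subgroup.inv_mem _ hg
  rw [Subgroup.mem_normalizer_iff] at hg2
  have := (hg2 ⟨u, hQ hu⟩).1 (by rw [Subgroup.mem_subgroupOf]; exact hu)
  rw [Subgroup.mem_subgroupOf] at this
  simpa using this

theorem card_conj [Fintype F] (p : ℕ) [Fact p.Prime] [CharP F p] (h2 : (2 : F) ≠ 0) (n : ℕ)
    (hF : Nat.card F = p ^ n) (P : Sylow p (Sp F)) :
    Nat.card (ConjClasses (P : Subgroup (Sp F))) * Nat.card F ^ 25 = (Sol F [] prs eqs).ncard := by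
  have hp : IsPGroup p (Ug (F := F)) := by
    apply IsPGroup.of_card (n := n * 25)
    rw [card_Ug h2, hF, ← pow_mul]
  obtain ⟨Q, hQ⟩ := hp.exists_le_sylow
  have hQ' := Ug_sylow p Q hQ
  have e : (P : Subgroup (Sp F)) ≃* (Ug (F := F)) :=
    (Sylow.equiv P Q).trans (MulEquiv.subgroupCongr hQ')
  have hc : Nat.card (ConjClasses (P : Subgroup (Sp F))) = Nat.card (ConjClasses (Ug (F := F))) := by
    have h1 := card_comm_eq_card_conjClasses_mul_card (P : Subgroup (Sp F))
    have h3 := card_comm_eq_card_conjClasses_mul_card (Ug (F := F))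
    have h4 : Nat.card {z : Prod (P : Subgroup (Sp F)) (P : Subgroup (Sp F)) // Commute z.1 z.2} =
        Nat.card {z : (Ug (F := F)) × (Ug (F := F)) // Commute z.1 z.2} := by
      refine Nat.card_congr (Equiv.subtypeEquiv (Equiv.prodCongr e.toEquiv e.toEquiv) ?_)
      rintro ⟨a, b⟩
      rw [commute_iff_eq, commute_iff_eq]
      show a * b = b * a ↔ e a * e b = e b * e a
      rw [← map_mul, ← map_mul, e.injective.eq_iff]
    rw [h1, h3, Nat.card_congr e.toEquiv] at h4
    exact Nat.eq_of_mul_eq_mul_right Nat.card_pos h4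
  rw [hc, ← card_comm_Ug h2, card_comm_eq_card_conjClasses_mul_card, card_Ug h2]

end Syl

theorem foo : run cert [] prs eqs = some [1, 26, 205, 680, 1130, 1025, 527, 156, 26, 2] := by
  decide +kernel

theorem final_arith (v k N : ℕ) (h1 : k * (v + 1) ^ 25 = N)
    (h3 : (N : ℤ) = ((v : ℤ) + 1) ^ 24 * pe v [1, 26, 205, 680, 1130, 1025, 527, 156, 26, 2]) :
    k = 2 * v ^ 8 + 24 * v ^ 7 + 132 * v ^ 6 + 395 * v ^ 5 + 630 * v ^ 4 + 500 * v ^ 3 +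
        180 * v ^ 2 + 25 * v + 1 := by
  rw [← h1] at h3
  simp only [pe] at h3
  push_cast at h3
  have h4 : ((v : ℤ) + 1) ^ 25 ≠ 0 := pow_ne_zero _ (by omega)
  have h5 : (k : ℤ) =
      2 * (v : ℤ) ^ 8 + 24 * v ^ 7 + 132 * v ^ 6 + 395 * v ^ 5 + 630 * v ^ 4 + 500 * v ^ 3 +
        180 * v ^ 2 + 25 * v + 1 := by
    apply mul_right_cancel₀ h4
    rw [h3]; ring
  exact_mod_cast h5

theorem card_final {F : Type*} [Field F] [Fintype F] (p : ℕ) [Fact p.Prime] [CharP F p]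
    (h2 : (2 : F) ≠ 0) (n : ℕ) (hF : Nat.card F = p ^ n) (P : Sylow p (Sp F)) (v : ℕ)
    (hv : Nat.card F = v + 1) :
    Nat.card (ConjClasses (P : Subgroup (Sp F))) =
      2 * v ^ 8 + 24 * v ^ 7 + 132 * v ^ 6 + 395 * v ^ 5 + 630 * v ^ 4 + 500 * v ^ 3 +
        180 * v ^ 2 + 25 * v + 1 := by
  have hc : (v : ℤ) = ({a : F | a ≠ 0}).ncard := by
    have h1 := Set.ncard_add_ncard_compl ({0} : Set F)
    rw [Set.ncard_singleton, hv] at h1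
    have h3 : ({0} : Set F)ᶜ = {a : F | a ≠ 0} := by ext; simp
    rw [h3] at h1
    exact_mod_cast (by omega : v = ({a : F | a ≠ 0}).ncard)
  have h1 := card_conj p h2 n hF P
  have h3 := run_sound h2 (v : ℤ) hc cert [] prs eqs
    [1, 26, 205, 680, 1130, 1025, 527, 156, 26, 2] inv_start foo
  exact final_arith v _ _ (by rw [← hv]; exact h1) h3

end Sp10

/-- The number of conjugacy classes of a Sylow `p`-subgroup of `Sp_10(F_q)`,
for `p` an odd prime and `q` a power of `p`, written in `v = q - 1`. -/
theorem card_conjClasses_sylow_sp10 (p q : ℕ) (hp : p.Prime) (hodd : Odd p)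
    (hq : ∃ n : ℕ, 0 < n ∧ q = p ^ n)
    (F : Type*) [Field F] [Fintype F] (hF : Fintype.card F = q)
    (P : Sylow p (Matrix.symplecticGroup (Fin 5) F)) (v : ℕ) (hv : v = q - 1) :
    Nat.card (ConjClasses (P : Subgroup (Matrix.symplecticGroup (Fin 5) F))) =
      2 * v ^ 8 + 24 * v ^ 7 + 132 * v ^ 6 + 395 * v ^ 5 + 630 * v ^ 4 + 500 * v ^ 3 + 180 * v ^ 2 + 25 * v + 1 := by

  obtain ⟨n, hn, rfl⟩ := hq
  have : Fact p.Prime := ⟨hp⟩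
  have : CharP F p := charP_of_card_eq_prime_pow hF
  have h2 : (2 : F) ≠ 0 := by
    intro h
    have h3 : ((2 : ℕ) : F) = 0 := by exact_mod_cast h
    rw [CharP.cast_eq_zero_iff F p] at h3
    have := (Nat.prime_dvd_prime_iff_eq hp Nat.prime_two).1 h3
    subst this
    exact absurd hodd (by decide)
  rw [← Nat.card_eq_fintype_card] at hF
  have hpos : 0 < p ^ n := pow_pos hp.pos n
  exact Sp10.card_final p h2 n hF P v (by omega)
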